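/- arXiv:1506.05679 — 4 statements merged into one kernel-verified Lean document; each statement's English description precedes it below -/
import Mathlib

section
/- Let Λ be a ℤ-lattice in ℂ² and let σ be a ℂ-linear automorphism of ℂ² with σ(Λ) = Λ. If the induced automorphism ⋀²(σ|_Λ) of ⋀²Λ is the identity, then σ = id or σ = −id. -/
set_option synthInstance.maxHeartbeats 1000000
set_option maxHeartbeats 1000000

open ExteriorAlgebra Module

noncomputable section

/-- `Λ` is a `ℤ`-lattice in `ℂ²`: it is the `ℤ`-span of an `ℝ`-basis of `ℂ²`. -/
def IsComplexTorusLattice (Λ : Submodule ℤ (ℂ × ℂ)) : Prop :=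
  ∃ b : Basis (Fin 4) ℝ (ℂ × ℂ), Λ = Submodule.span ℤ (Set.range b)

/-- The image of the `n`-th exterior power under the algebra morphism induced by a linear map
lands in the `n`-th exterior power. -/
lemma map_mem_exteriorPower {R M N : Type*} [CommRing R] [AddCommGroup M] [Module R M]
    [AddCommGroup N] [Module R N] (f : M →ₗ[R] N) (n : ℕ) {x : ExteriorAlgebra R M}
    (hx : x ∈ ⋀[R]^n M) : ExteriorAlgebra.map f x ∈ ⋀[R]^n N := by
  rw [← ExteriorAlgebra.ιMulti_span_fixedDegree] at hx ⊢
  induction hx using Submodule.span_induction with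
  | mem y hy =>
      obtain ⟨m, rfl⟩ := hy
      rw [ExteriorAlgebra.map_apply_ιMulti]
      exact Submodule.subset_span ⟨f ∘ m, rfl⟩
  | zero => simp
  | add a b _ _ ha hb => rw [map_add]; exact Submodule.add_mem _ ha hb
  | smul r a _ ha => rw [map_smul]; exact Submodule.smul_mem _ r ha

/-- The `n`-th exterior power of a linear map. -/
def extPowMap {R M N : Type*} [CommRing R] [AddCommGroup M] [Module R M]
    [AddCommGroup N] [Module R N] (n : ℕ) (f : M →ₗ[R] N) : ⋀[R]^n M →ₗ[R] ⋀[R]^n N :=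
  LinearMap.restrict (ExteriorAlgebra.map f).toLinearMap
    (fun _ hx => map_mem_exteriorPower f n hx)

/-- The automorphism `σ` of `ℂ²` maps the lattice `Λ` onto itself. -/
def PreservesLattice (σ : (ℂ × ℂ) ≃ₗ[ℂ] (ℂ × ℂ)) (Λ : Submodule ℤ (ℂ × ℂ)) : Prop :=
  Λ.map ((σ.restrictScalars ℤ : (ℂ × ℂ) ≃ₗ[ℤ] (ℂ × ℂ)) : (ℂ × ℂ) →ₗ[ℤ] (ℂ × ℂ)) = Λ

/-- The restriction `σ|_Λ` of `σ` to the lattice `Λ`, as a `ℤ`-linear automorphism. -/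
def latRestrict (σ : (ℂ × ℂ) ≃ₗ[ℂ] (ℂ × ℂ)) (Λ : Submodule ℤ (ℂ × ℂ))
    (h : PreservesLattice σ Λ) : ↥Λ ≃ₗ[ℤ] ↥Λ :=
  (σ.restrictScalars ℤ).ofSubmodules Λ Λ h

/-- The induced endomorphism `⋀²(σ|_Λ)` of `⋀²Λ`. -/
def extSq (σ : (ℂ × ℂ) ≃ₗ[ℂ] (ℂ × ℂ)) (Λ : Submodule ℤ (ℂ × ℂ))
    (h : PreservesLattice σ Λ) : Module.End ℤ (⋀[ℤ]^2 ↥Λ) :=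
  extPowMap 2 (latRestrict σ Λ h).toLinearMap

/-- The invariant lattice `T = {x ∈ ⋀²Λ : ⋀²(σ|_Λ)(x) = x}`. -/
def invLat (σ : (ℂ × ℂ) ≃ₗ[ℂ] (ℂ × ℂ)) (Λ : Submodule ℤ (ℂ × ℂ))
    (h : PreservesLattice σ Λ) : Submodule ℤ (⋀[ℤ]^2 ↥Λ) :=
  LinearMap.ker (extSq σ Λ h - LinearMap.id)

/-- `b` is the wedge form on `⋀²Λ` determined by the generator `vol` of `⋀⁴Λ`, i.e.
`x ∧ y = b(x,y) • vol`. -/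
def IsWedgeForm (Λ : Submodule ℤ (ℂ × ℂ)) (vol : ⋀[ℤ]^4 ↥Λ)
    (b : ⋀[ℤ]^2 ↥Λ →ₗ[ℤ] ⋀[ℤ]^2 ↥Λ →ₗ[ℤ] ℤ) : Prop :=
  ∀ x y : ⋀[ℤ]^2 ↥Λ, (x : ExteriorAlgebra ℤ ↥Λ) * (y : ExteriorAlgebra ℤ ↥Λ)
    = b x y • (vol : ExteriorAlgebra ℤ ↥Λ)

/-- The restriction of the form `b` to the submodule `T` admits Gram matrix `G`
in some basis; i.e. `(T, b|_T)` is isometric to the lattice with Gram matrix `G`. -/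
def HasGramMatrix {M : Type*} [AddCommGroup M] [Module ℤ M] (b : M →ₗ[ℤ] M →ₗ[ℤ] ℤ)
    (T : Submodule ℤ M) {n : ℕ} (G : Matrix (Fin n) (Fin n) ℤ) : Prop :=
  ∃ v : Basis (Fin n) ℤ ↥T, ∀ i j, b (v i : M) (v j : M) = G i j

lemma extPowMap_apply_ιMulti {R M N : Type*} [CommRing R] [AddCommGroup M] [Module R M]
    [AddCommGroup N] [Module R N] (n : ℕ) (f : M →ₗ[R] N) (m : Fin n → M) :
    extPowMap n f (exteriorPower.ιMulti R n m) = exteriorPower.ιMulti R n (f ∘ m) :=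
  Subtype.ext (ExteriorAlgebra.map_apply_ιMulti f m)

/-- An endomorphism acting trivially on the exterior square preserves all `2 × 2` minors. -/
lemma minor_eq_of_extPowMap_two_eq_id {R M : Type*} [CommRing R] [AddCommGroup M] [Module R M]
    {f : M →ₗ[R] M} (hf : extPowMap 2 f = LinearMap.id) (φ ψ : Dual R M) (u v : M) :
    φ (f u) * ψ (f v) - φ (f v) * ψ (f u) = φ u * ψ v - φ v * ψ u := by
  have h := congrArg (exteriorPower.pairingDual R M 2 (exteriorPower.ιMulti R 2 ![φ, ψ]))
    (LinearMap.congr_fun hf (exteriorPower.ιMulti R 2 ![u, v]))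
  rw [extPowMap_apply_ιMulti, LinearMap.id_apply, exteriorPower.pairingDual_ιMulti_ιMulti,
    exteriorPower.pairingDual_ιMulti_ιMulti, Matrix.det_fin_two, Matrix.det_fin_two] at h
  simp only [Matrix.of_apply, Function.comp_apply, Matrix.cons_val_zero, Matrix.cons_val_one] at h
  linear_combination h

/-- In rank at least three, an endomorphism acting trivially on the exterior square is diagonal
in every basis. -/
lemma coord_eq_zero_of_extPowMap_two_eq_id {R M ι : Type*} [CommRing R] [AddCommGroup M]
    [Module R M] (e : Basis ι R M) {f : M →ₗ[R] M} (hf : extPowMap 2 f = LinearMap.id)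
    {k i m : ι} (hki : k ≠ i) (hmk : m ≠ k) (hmi : m ≠ i) : e.coord k (f (e i)) = 0 := by
  have h₁ := minor_eq_of_extPowMap_two_eq_id hf (e.coord i) (e.coord m) (e i) (e m)
  have h₂ := minor_eq_of_extPowMap_two_eq_id hf (e.coord k) (e.coord m) (e i) (e m)
  have h₃ := minor_eq_of_extPowMap_two_eq_id hf (e.coord k) (e.coord i) (e i) (e m)
  simp only [Basis.coord_apply, Basis.repr_self, Finsupp.single_eq_same, ne_eq, hki, hmi,
    hmk.symm, hmi.symm, not_false_eq_true, Finsupp.single_eq_of_ne] at h₁ h₂ h₃ ⊢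
  linear_combination -(e.repr (f (e i)) k) * h₁ + e.repr (f (e i)) i * h₂
    - e.repr (f (e i)) m * h₃

/-- An endomorphism of `ℤ⁴` acting trivially on the exterior square is `1` or `-1`. -/
lemma exists_isUnit_smul_of_extPowMap_two_eq_id {M : Type*} [AddCommGroup M]
    (e : Basis (Fin 4) ℤ M) {f : M →ₗ[ℤ] M} (hf : extPowMap 2 f = LinearMap.id) :
    ∃ c : ℤ, (c = 1 ∨ c = -1) ∧ ∀ i, f (e i) = c • e i := by
  have hoff : ∀ k i, k ≠ i → e.repr (f (e i)) k = 0 := by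
    intro k i hki
    obtain ⟨m, hmk, hmi⟩ : ∃ m : Fin 4, m ≠ k ∧ m ≠ i := by decide +revert
    exact coord_eq_zero_of_extPowMap_two_eq_id e hf hki hmk hmi
  have hdiag : ∀ i j, i ≠ j → e.repr (f (e i)) i * e.repr (f (e j)) j = 1 := by
    intro i j hij
    have h := minor_eq_of_extPowMap_two_eq_id hf (e.coord i) (e.coord j) (e i) (e j)
    simpa [hoff i j hij, hij, hij.symm] using h
  have h0 : e.repr (f (e 0)) 0 = 1 ∨ e.repr (f (e 0)) 0 = -1 :=
    Int.isUnit_iff.mp (IsUnit.of_mul_eq_one _ (hdiag 0 1 (by decide)))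
  refine ⟨e.repr (f (e 0)) 0, h0, fun i => e.ext_elem fun k => ?_⟩
  by_cases hki : k = i
  · subst hki
    by_cases hk : k = 0
    · subst hk; simp
    · have h := hdiag 0 k (Ne.symm hk)
      rcases h0 with h0 | h0 <;> rw [h0] at h ⊢ <;> simp <;> linarith
  · rw [hoff k i hki]
    simp [hki]

/-- If `Λ` is a `ℤ`-lattice in `ℂ²` and `σ` is a `ℂ`-linear automorphism of `ℂ²` with
`σ(Λ) = Λ` such that the induced automorphism `⋀²(σ|_Λ)` of `⋀²Λ` is the identity, then
`σ = id` or `σ = -id`. -/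
theorem stmt_2 (Λ : Submodule ℤ (ℂ × ℂ)) (hΛ : IsComplexTorusLattice Λ)
    (σ : (ℂ × ℂ) ≃ₗ[ℂ] (ℂ × ℂ)) (hσΛ : PreservesLattice σ Λ)
    (hid : extSq σ Λ hσΛ = LinearMap.id) :
    σ = LinearEquiv.refl ℂ (ℂ × ℂ) ∨ σ = LinearEquiv.neg ℂ := by
  obtain ⟨b, rfl⟩ := hΛ
  obtain ⟨c, hc, hf⟩ := exists_isUnit_smul_of_extPowMap_two_eq_id (b.restrictScalars ℤ) hid
  have hσ : ∀ i, σ (b i) = c • b i := fun i => by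
    have h : σ (b.restrictScalars ℤ i) = (c • b.restrictScalars ℤ i : Submodule.span ℤ (Set.range b)) :=
      congrArg Subtype.val (hf i)
    rwa [Submodule.coe_smul, Basis.restrictScalars_apply] at h
  have hext : ∀ τ : (ℂ × ℂ) ≃ₗ[ℂ] (ℂ × ℂ), (∀ i, σ (b i) = τ (b i)) → σ = τ := fun τ h =>
    LinearEquiv.ext fun x => LinearMap.congr_fun
      (b.ext h : (σ : (ℂ × ℂ) →ₗ[ℂ] (ℂ × ℂ)).restrictScalars ℝ =
        (τ : (ℂ × ℂ) →ₗ[ℂ] (ℂ × ℂ)).restrictScalars ℝ) x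
  rcases hc with rfl | rfl
  · exact Or.inl (hext _ fun i => by simpa using hσ i)
  · exact Or.inr (hext _ fun i => by simpa using hσ i)
end
end

section
/- Let Λ be a ℤ-lattice in ℂ² and let σ be a ℂ-linear automorphism of ℂ² of finite order with σ(Λ) = Λ, such that the induced automorphism ⋀²(σ|_Λ) of ⋀²Λ has prime order p. Then the rank of the fixed submodule T = {x ∈ ⋀²Λ : ⋀²(σ|_Λ)(x) = x} (a free ℤ-module) is even. -/
set_option synthInstance.maxHeartbeats 1000000
set_option maxHeartbeats 1000000

open ExteriorAlgebra Module

noncomputable section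

namespace Matrix

variable {ι : Type*} [Fintype ι] [DecidableEq ι]

/-- A real matrix of finite order has no real eigenvalue greater than `1`. -/
lemma det_scalar_sub_ne_zero_of_pow_eq_one {A : Matrix ι ι ℝ} {N : ℕ} (hN : N ≠ 0)
    (hA : A ^ N = 1) {r : ℝ} (hr : 1 < r) : (scalar ι r - A).det ≠ 0 := by
  have hdvd : scalar ι r - A ∣ scalar ι (r ^ N - 1) := by
    have h := (scalar_commute r (fun _ => Commute.all _ _) A).sub_dvd_pow_sub_pow N
    rwa [hA, ← map_pow, ← map_one (scalar ι), ← map_sub] at h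
  obtain ⟨C, hC⟩ := hdvd
  intro h0
  have h := congrArg det hC
  rw [det_mul, h0, zero_mul] at h
  simp only [scalar_apply, det_diagonal, Finset.prod_const] at h
  exact pow_ne_zero _ (sub_ne_zero.2 (one_lt_pow₀ hr hN).ne') h

/-- A real matrix of finite order without eigenvalue `1` satisfies `0 < det (1 - A)`. -/
lemma det_one_sub_pos_of_pow_eq_one {A : Matrix ι ι ℝ} {N : ℕ} (hN : N ≠ 0)
    (hA : A ^ N = 1) (h1 : (1 - A).det ≠ 0) : 0 < (1 - A).det := by
  cases isEmpty_or_nonempty ι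
  · simp
  have hev : A.charpoly.eval 1 = (1 - A).det := by rw [eval_charpoly, map_one]
  have htend : Filter.Tendsto (fun x => A.charpoly.eval x) Filter.atTop Filter.atTop := by
    refine A.charpoly.tendsto_atTop_of_leadingCoeff_nonneg ?_ ?_
    · rw [charpoly_degree_eq_dim]
      exact_mod_cast Fintype.card_pos
    · rw [A.charpoly_monic.leadingCoeff]
      exact zero_le_one
  obtain ⟨R, hR, hR1⟩ :=
    ((htend.eventually_gt_atTop 0).and (Filter.eventually_ge_atTop (1 : ℝ))).exists
  by_contra hneg
  have hlt : A.charpoly.eval 1 < 0 := hev ▸ lt_of_le_of_ne (not_lt.1 hneg) h1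
  obtain ⟨r, hr, hr0⟩ := intermediate_value_Icc hR1 A.charpoly.continuous.continuousOn
    ⟨hlt.le, hR.le⟩
  rcases hr.1.eq_or_lt with rfl | hr1
  · exact hlt.ne hr0
  · exact det_scalar_sub_ne_zero_of_pow_eq_one hN hA hr1 (by rw [← eval_charpoly]; exact hr0)

/-- A real matrix of finite order and positive determinant without eigenvalue `1` has even
size. -/
lemma even_card_of_pow_eq_one {A : Matrix ι ι ℝ} {N : ℕ} (hN : N ≠ 0)
    (hA : A ^ N = 1) (hdet : 0 < A.det) (h1 : (1 - A).det ≠ 0) : Even (Fintype.card ι) := by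
  have hinv : A * (1 - A ^ (N - 1)) = -(1 - A) := by
    rw [mul_sub, mul_one, mul_pow_sub_one hN, hA, neg_sub]
  have hmul : A.det * (1 - A ^ (N - 1)).det = (-1) ^ Fintype.card ι * (1 - A).det := by
    rw [← det_mul, hinv, det_neg]
  have hne : (1 - A ^ (N - 1)).det ≠ 0 := fun h0 => by simp [h0, h1] at hmul
  have hpos := det_one_sub_pos_of_pow_eq_one hN hA h1
  have hpos' := det_one_sub_pos_of_pow_eq_one hN
    (by rw [← pow_mul, mul_comm, pow_mul, hA, one_pow] : (A ^ (N - 1)) ^ N = 1) hne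
  by_contra hodd
  rw [(Nat.not_even_iff_odd.1 hodd).neg_one_pow] at hmul
  nlinarith [mul_pos hdet hpos']

end Matrix

/-- An endomorphism of finite order and positive determinant of a lattice, fixing no nonzero
vector, only exists in even rank. -/
lemma even_finrank_of_pow_eq_one {M : Type*} [AddCommGroup M] [Module.Free ℤ M]
    [Module.Finite ℤ M] {g : Module.End ℤ M} {N : ℕ} (hN : N ≠ 0) (hg : g ^ N = 1)
    (hdet : 0 < LinearMap.det g) (h1 : LinearMap.ker (1 - g) = ⊥) : Even (finrank ℤ M) := by
  let b := Module.Free.chooseBasis ℤ M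
  let A := LinearMap.toMatrix b b g
  let φ := Int.castRingHom ℝ
  have hA : A ^ N = 1 := by
    rw [LinearMap.toMatrix_pow, hg, LinearMap.toMatrix_one]
  have hAdet : A.det = LinearMap.det g := LinearMap.det_toMatrix b g
  have hA1 : (1 - A).det = LinearMap.det (1 - g) := by
    rw [← LinearMap.det_toMatrix b, map_sub, LinearMap.toMatrix_one]
  rw [finrank_eq_card_basis b]
  refine Matrix.even_card_of_pow_eq_one (A := φ.mapMatrix A) hN ?_ ?_ ?_
  · rw [← map_pow, hA, map_one]
  · rw [← RingHom.map_det, hAdet]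
    exact Int.cast_pos.2 hdet
  · rw [← map_one φ.mapMatrix, ← map_sub, ← RingHom.map_det, hA1]
    refine Int.cast_ne_zero.2 fun h0 => ?_
    exact (LinearMap.bot_lt_ker_of_det_eq_zero h0).ne' h1

/-- If an endomorphism of a lattice has finite order and positive determinant, then its
fixed sublattice has even corank. -/
lemma even_finrank_iff_even_finrank_ker {M : Type*} [AddCommGroup M] [Module.Free ℤ M]
    [Module.Finite ℤ M] {g : Module.End ℤ M} {N : ℕ} (hN : N ≠ 0) (hg : g ^ N = 1)
    (hdet : 0 < LinearMap.det g) :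
    Even (finrank ℤ M) ↔ Even (finrank ℤ (LinearMap.ker (g - LinearMap.id))) := by
  set K := LinearMap.ker (g - LinearMap.id) with hK
  have hmem : ∀ x, x ∈ K ↔ g x = x := fun x => by
    rw [hK, LinearMap.mem_ker, LinearMap.sub_apply, LinearMap.id_apply, sub_eq_zero]
  have : Module.Free ℤ (M ⧸ K) :=
    Module.Free.of_equiv (g - LinearMap.id).quotKerEquivRange.symm
  have hle : K ≤ K.comap g := fun x hx => by
    rw [Submodule.mem_comap, (hmem x).1 hx]
    exact hx
  have hres : g.restrict hle = LinearMap.id :=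
    LinearMap.ext fun x => Subtype.ext ((hmem x).1 x.2)
  have hquot : 0 < LinearMap.det (K.mapQ K g hle) := by
    have h := LinearMap.det_eq_det_mul_det K g hle
    rw [hres, LinearMap.det_id, one_mul] at h
    rwa [← h]
  have hpow : (K.mapQ K g hle) ^ N = 1 := by
    rw [← Submodule.mapQ_pow]
    ext x
    simp [hg]
  have hker : LinearMap.ker (1 - K.mapQ K g hle) = ⊥ := by
    rw [LinearMap.ker_eq_bot']
    intro q hq
    obtain ⟨x, rfl⟩ := K.mkQ_surjective q
    have hk : g x - x ∈ K := by
      rw [← neg_sub, K.neg_mem_iff, ← Submodule.Quotient.mk_eq_zero]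
      simpa using hq
    have hiter : ∀ n : ℕ, (g ^ n) x = x + n • (g x - x) := by
      intro n
      induction n with
      | zero => simp
      | succ n ih =>
        rw [pow_succ', Module.End.mul_apply, ih, map_add, map_nsmul, (hmem _).1 hk, succ_nsmul]
        abel
    have hzero := hiter N
    rw [hg, Module.End.one_apply, left_eq_add, ← natCast_zsmul] at hzero
    have : g x - x = 0 := (smul_eq_zero.1 hzero).resolve_left (Int.natCast_ne_zero.2 hN)
    exact (Submodule.Quotient.mk_eq_zero K).2 ((hmem x).2 (sub_eq_zero.1 this))
  have heven := even_finrank_of_pow_eq_one hN hpow hquot hker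
  rw [← K.finrank_quotient_add_finrank, Nat.even_add]
  simp [heven]

lemma extPowMap_eq_map {R M N : Type*} [CommRing R] [AddCommGroup M] [Module R M]
    [AddCommGroup N] [Module R N] (n : ℕ) (f : M →ₗ[R] N) :
    extPowMap n f = exteriorPower.map n f := by
  refine exteriorPower.linearMap_ext ?_
  refine AlternatingMap.ext fun v => Subtype.ext ?_
  simp only [LinearMap.compAlternatingMap_apply, exteriorPower.map_apply_ιMulti,
    exteriorPower.ιMulti_apply_coe]
  exact ExteriorAlgebra.map_apply_ιMulti f v

/-- The matrix of an exterior power of `f` consists of the minors of the matrix of `f`. -/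
lemma toMatrix_exteriorPower_map {R M I : Type*} [CommRing R] [AddCommGroup M] [Module R M]
    [LinearOrder I] [Fintype I] (b : Basis I R M) (n : ℕ) (f : M →ₗ[R] M)
    (s t : Set.powersetCard I n) :
    LinearMap.toMatrix (b.exteriorPower n) (b.exteriorPower n) (exteriorPower.map n f) s t =
      (Matrix.of fun i j => LinearMap.toMatrix b b f (Set.powersetCard.ofFinEmbEquiv.symm s j)
        (Set.powersetCard.ofFinEmbEquiv.symm t i)).det := by
  rw [LinearMap.toMatrix_apply, exteriorPower.basis_apply, exteriorPower.map_apply_ιMulti_family,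
    exteriorPower.basis_repr_apply, exteriorPower.ιMulti_family,
    exteriorPower.ιMultiDual_apply_ιMulti]
  simp [LinearMap.toMatrix_apply]

/-- Every nonsingular complex `2 × 2` matrix has a square root. -/
lemma Matrix.exists_mul_self_eq_of_det_ne_zero (A : Matrix (Fin 2) (Fin 2) ℂ) (hA : A.det ≠ 0) :
    ∃ B, B * B = A := by
  have key : ∃ s : ℂ, s * s = A.det ∧ A.trace + 2 * s ≠ 0 := by
    obtain ⟨s, hs⟩ := IsAlgClosed.exists_eq_mul_self A.det
    by_cases h : A.trace + 2 * s = 0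
    · refine ⟨-s, by rw [hs, neg_mul_neg], fun h' => hA ?_⟩
      have : s = 0 := by linear_combination (h - h') / 4
      rw [hs, this, zero_mul]
    · exact ⟨s, hs.symm, h⟩
  obtain ⟨s, hs, ht0⟩ := key
  obtain ⟨t, ht⟩ := IsAlgClosed.exists_eq_mul_self (A.trace + 2 * s)
  have ht' : t ≠ 0 := by
    rintro rfl
    exact ht0 (by rw [ht, zero_mul])
  have hsq : (A + s • 1) * (A + s • 1) = (t * t) • A := by
    rw [← ht]
    rw [Matrix.det_fin_two] at hs
    rw [Matrix.trace_fin_two]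
    ext i j
    fin_cases i <;> fin_cases j <;> simp [Matrix.mul_apply, Fin.sum_univ_two] <;>
      first | ring1 | linear_combination hs
  refine ⟨t⁻¹ • (A + s • 1), ?_⟩
  rw [smul_mul_smul_comm, hsq, smul_smul, ← mul_inv, inv_mul_cancel₀ (mul_ne_zero ht' ht'),
    one_smul]

lemma exists_mul_self_eq_of_linearEquiv (σ : (ℂ × ℂ) ≃ₗ[ℂ] (ℂ × ℂ)) :
    ∃ τ : (ℂ × ℂ) →ₗ[ℂ] (ℂ × ℂ), τ ∘ₗ τ = σ := by
  let b := Basis.finTwoProd ℂ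
  obtain ⟨B, hB⟩ := (LinearMap.toMatrix b b σ.toLinearMap).exists_mul_self_eq_of_det_ne_zero
    (by rw [LinearMap.det_toMatrix]; exact (LinearEquiv.isUnit_det' σ).ne_zero)
  refine ⟨Matrix.toLin b b B, ?_⟩
  rw [← Matrix.toLin_mul, hB, Matrix.toLin_toMatrix]

/-- The determinant of an endomorphism of a lattice on an exterior power agrees with that of its
real extension. -/
lemma det_exteriorPower_map_restrict {V I : Type*} [AddCommGroup V] [Module ℝ V]
    [LinearOrder I] [Fintype I] (b : Basis I ℝ V) (n : ℕ) (f : V →ₗ[ℝ] V)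
    (g : Submodule.span ℤ (Set.range b) →ₗ[ℤ] Submodule.span ℤ (Set.range b))
    (hfg : ∀ x, (g x : V) = f x) :
    ((LinearMap.det (exteriorPower.map n g) : ℤ) : ℝ) = LinearMap.det (exteriorPower.map n f) := by
  let c := b.restrictScalars ℤ
  have hentry : ∀ i j, ((LinearMap.toMatrix c c g i j : ℤ) : ℝ) = LinearMap.toMatrix b b f i j := by
    intro i j
    rw [LinearMap.toMatrix_apply, LinearMap.toMatrix_apply, ← b.restrictScalars_apply ℤ j, ← hfg,
      ← b.restrictScalars_repr_apply ℤ]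
    rfl
  rw [← LinearMap.det_toMatrix (c.exteriorPower n), ← LinearMap.det_toMatrix (b.exteriorPower n),
    ← eq_intCast (Int.castRingHom ℝ), RingHom.map_det]
  congr 1
  ext s t
  rw [RingHom.mapMatrix_apply, Matrix.map_apply, toMatrix_exteriorPower_map,
    toMatrix_exteriorPower_map, RingHom.map_det]
  congr 1
  ext i j
  exact hentry _ _

/-- If `Λ` is a `ℤ`-lattice in `ℂ²` and `σ` is a `ℂ`-linear automorphism of `ℂ²` of finite
order with `σ(Λ) = Λ`, such that `⋀²(σ|_Λ)` has prime order `p`, then the fixed submodule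
`T = {x ∈ ⋀²Λ : ⋀²(σ|_Λ)(x) = x}` has even rank. -/
theorem stmt_3 (Λ : Submodule ℤ (ℂ × ℂ)) (hΛ : IsComplexTorusLattice Λ)
    (σ : (ℂ × ℂ) ≃ₗ[ℂ] (ℂ × ℂ)) (hord : IsOfFinOrder σ) (hσΛ : PreservesLattice σ Λ)
    (p : ℕ) (hp : p.Prime) (hordp : orderOf (extSq σ Λ hσΛ) = p) :
    Even (Module.finrank ℤ ↥(invLat σ Λ hσΛ)) := by
  obtain ⟨b, rfl⟩ := hΛ
  let c := b.restrictScalars ℤ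
  have : Module.Free ℤ (Submodule.span ℤ (Set.range b)) := Module.Free.of_basis c
  have : Module.Finite ℤ (Submodule.span ℤ (Set.range b)) := Module.Finite.of_basis c
  have hext : extSq σ _ hσΛ = exteriorPower.map 2 (latRestrict σ _ hσΛ).toLinearMap :=
    extPowMap_eq_map 2 _
  have hpow : extSq σ _ hσΛ ^ p = 1 := hordp ▸ pow_orderOf_eq_one _
  obtain ⟨τ, hτ⟩ := exists_mul_self_eq_of_linearEquiv σ
  have hdet : 0 < LinearMap.det (extSq σ _ hσΛ) := by
    have hne : LinearMap.det (extSq σ _ hσΛ) ≠ 0 := fun h0 => by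
      have h := congrArg LinearMap.det hpow
      rw [map_pow, h0, zero_pow hp.ne_zero, map_one] at h
      exact zero_ne_one h
    refine lt_of_le_of_ne ?_ hne.symm
    have hcast := det_exteriorPower_map_restrict b 2 (τ.restrictScalars ℝ ∘ₗ τ.restrictScalars ℝ)
      (latRestrict σ _ hσΛ).toLinearMap (fun x => (LinearMap.congr_fun hτ (x : ℂ × ℂ)).symm)
    rw [exteriorPower.map_comp, LinearMap.det_comp, ← hext] at hcast
    rw [← Int.cast_nonneg_iff (R := ℝ), hcast]
    exact mul_self_nonneg _
  refine (even_finrank_iff_even_finrank_ker hp.ne_zero hpow hdet).1 ?_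
  rw [exteriorPower.finrank_eq, finrank_eq_card_basis c]
  decide
end
end

section
/- Let Λ be a ℤ-lattice in ℂ² and let σ be a ℂ-linear automorphism of ℂ² of finite order d with σ(Λ) = Λ. If σ is symplectic, i.e. det_ℂ σ = 1, then d ∈ {1, 2, 3, 4, 6}. -/
set_option synthInstance.maxHeartbeats 1000000
set_option maxHeartbeats 1000000

open ExteriorAlgebra Module

noncomputable section

/-- Cayley-Hamilton for endomorphisms of `ℂ²` of determinant one. -/
lemma exists_mul_self_eq_smul_sub_one (f : Module.End ℂ (ℂ × ℂ)) (hf : LinearMap.det f = 1) :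
    ∃ t : ℂ, f * f = t • f - 1 := by
  let e := LinearMap.toMatrixAlgEquiv (Basis.finTwoProd ℂ)
  have hdet : (e f).det = 1 := by
    rw [← hf]
    exact LinearMap.det_toMatrix (Basis.finTwoProd ℂ) f
  refine ⟨(e f).trace, e.injective ?_⟩
  rw [map_mul, map_sub, map_smul, map_one]
  generalize e f = M at hdet ⊢
  rw [Matrix.det_fin_two] at hdet
  ext i j
  fin_cases i <;> fin_cases j <;>
    simp [Matrix.mul_apply, Fin.sum_univ_two, Matrix.trace_fin_two] <;>
    first | linear_combination -hdet | ring

/-- If `f` has finite order and `f ^ 2 = t f - 1`, then `t` is real with `|t| ≤ 2`. -/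
lemma exists_real_of_mul_self_eq (f : Module.End ℂ (ℂ × ℂ)) {t : ℂ} (hf : f * f = t • f - 1)
    {d : ℕ} (hd : d ≠ 0) (hfd : f ^ d = 1) : ∃ r : ℝ, t = r ∧ |r| ≤ 2 := by
  obtain ⟨α, hα⟩ := Module.End.exists_eigenvalue f
  obtain ⟨v, hv⟩ := hα.exists_hasEigenvector
  have hv0 : v ≠ 0 := hv.2
  have hpow : α ^ d = 1 := by
    have h := hv.pow_apply d
    rw [hfd, Module.End.one_apply] at h
    have : (α ^ d - 1) • v = 0 := by rw [sub_smul, one_smul, ← h, sub_self]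
    exact sub_eq_zero.mp ((smul_eq_zero.mp this).resolve_right hv0)
  have hquad : α * α - t * α + 1 = 0 := by
    have h := LinearMap.congr_fun hf v
    simp only [Module.End.mul_apply, LinearMap.sub_apply, LinearMap.smul_apply,
      Module.End.one_apply, hv.apply_eq_smul, map_smul] at h
    have : (α * α - t * α + 1) • v = 0 := by
      rw [add_smul, sub_smul, mul_smul, mul_smul, one_smul, h]
      abel
    exact (smul_eq_zero.mp this).resolve_right hv0
  have hnorm : ‖α‖ = 1 := Complex.norm_eq_one_of_pow_eq_one hpow hd
  have hα0 : α ≠ 0 := by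
    rintro rfl
    simp at hnorm
  have hconj : α * (starRingEnd ℂ) α = 1 := by
    rw [Complex.mul_conj, Complex.normSq_eq_norm_sq, hnorm]
    simp
  refine ⟨2 * α.re, ?_, ?_⟩
  · rw [← Complex.add_conj]
    apply mul_left_cancel₀ hα0
    linear_combination -hquad - hconj
  · have := Complex.abs_re_le_norm α
    rw [abs_mul, abs_two]
    linarith

/-- A real multiplier of a `ℤ`-lattice is an integer. -/
lemma exists_int_of_smul_mem {Λ : Submodule ℤ (ℂ × ℂ)} (hΛ : IsComplexTorusLattice Λ) (r : ℝ)
    (hr : ∀ v ∈ Λ, r • v ∈ Λ) : ∃ n : ℤ, r = n := by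
  obtain ⟨b, rfl⟩ := hΛ
  have h := hr (b 0) (Submodule.subset_span ⟨0, rfl⟩)
  obtain ⟨n, hn⟩ := (b.mem_span_iff_repr_mem ℤ _).mp h 0
  exact ⟨n, by simpa using hn.symm⟩

/-- A unipotent element of finite order whose unipotent part squares to zero is trivial. -/
lemma eq_one_of_sub_one_mul_self_eq_zero {R : Type*} [Ring R] [IsAddTorsionFree R] {f : R}
    (hf : (f - 1) * (f - 1) = 0) {d : ℕ} (hd : d ≠ 0) (hfd : f ^ d = 1) : f = 1 := by
  have key : ∀ k : ℕ, f ^ k = 1 + k • (f - 1) := by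
    intro k
    induction k with
    | zero => simp
    | succ k ih =>
      have hf' : f * f = f + f - 1 := by
        have : (f - 1) * (f - 1) = f * f - (f + f - 1) := by noncomm_ring
        rwa [hf, eq_comm, sub_eq_zero] at this
      rw [pow_succ, ih, add_mul, smul_mul_assoc, sub_mul, hf', succ_nsmul]
      simp only [one_mul]
      rw [show f + f - 1 - f = f - 1 by abel]
      abel
  have h := key d
  rw [hfd, left_eq_add, smul_eq_zero] at h
  exact sub_eq_zero.mp (h.resolve_left hd)

/-- A finite-order `f` with `f ^ 2 = n f - 1`, for an integer `|n| ≤ 2`, has order dividing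
`4` or `6`. -/
lemma pow_four_or_pow_six_eq_one {R : Type*} [Ring R] [IsAddTorsionFree R] {f : R} {n : ℤ}
    (hn : |n| ≤ 2) (hf : f * f = n • f - 1) {d : ℕ} (hd : d ≠ 0) (hfd : f ^ d = 1) :
    f ^ 4 = 1 ∨ f ^ 6 = 1 := by
  obtain ⟨h1, h2⟩ := abs_le.mp hn
  interval_cases n
  · left
    have hg : (f * f) = 1 := by
      have hneg : f * f + 2 • f + 1 = 0 := by rw [hf]; module
      refine eq_one_of_sub_one_mul_self_eq_zero ?_ hd ?_
      · have : (f * f - 1) * (f * f - 1) = (f * f + 2 • f + 1) * ((f - 1) * (f - 1)) := by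
          noncomm_ring
        rw [this, hneg, zero_mul]
      · rw [← pow_two, ← pow_mul, mul_comm, pow_mul, hfd, one_pow]
    rw [show 4 = 2 * 2 from rfl, pow_mul, pow_two f, hg, one_pow]
  · right
    have h0 : f * f + f + 1 = 0 := by rw [hf]; module
    have : f ^ 6 - 1 = (f * f + f + 1) * (f ^ 4 - f ^ 3 + f - 1) := by noncomm_ring
    rwa [h0, zero_mul, sub_eq_zero] at this
  · left
    have h0 : f * f + 1 = 0 := by rw [hf]; module
    have : f ^ 4 - 1 = (f * f + 1) * (f * f - 1) := by noncomm_ring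
    rwa [h0, zero_mul, sub_eq_zero] at this
  · right
    have h0 : f * f - f + 1 = 0 := by rw [hf]; module
    have : f ^ 6 - 1 = (f * f - f + 1) * (f ^ 4 + f ^ 3 - f - 1) := by noncomm_ring
    rwa [h0, zero_mul, sub_eq_zero] at this
  · left
    rw [eq_one_of_sub_one_mul_self_eq_zero (f := f) ?_ hd hfd, one_pow]
    have : (f - 1) * (f - 1) = f * f - 2 • f + 1 := by noncomm_ring
    rw [this, hf]
    module

/-- If `Λ` is a `ℤ`-lattice in `ℂ²` and `σ` is a `ℂ`-linear automorphism of `ℂ²` of finite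
order `d` with `σ(Λ) = Λ` which is symplectic, i.e. `det_ℂ σ = 1`, then
`d ∈ {1, 2, 3, 4, 6}`. -/
theorem stmt_4 (Λ : Submodule ℤ (ℂ × ℂ)) (hΛ : IsComplexTorusLattice Λ)
    (σ : (ℂ × ℂ) ≃ₗ[ℂ] (ℂ × ℂ)) (hσΛ : PreservesLattice σ Λ)
    (d : ℕ) (hord : orderOf σ = d) (hd0 : 0 < d)
    (hsymp : LinearMap.det (σ : (ℂ × ℂ) →ₗ[ℂ] (ℂ × ℂ)) = 1) :
    d ∈ ({1, 2, 3, 4, 6} : Set ℕ) := by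
  have hd : d ≠ 0 := hd0.ne'
  set f : Module.End ℂ (ℂ × ℂ) := (σ : (ℂ × ℂ) →ₗ[ℂ] (ℂ × ℂ))
  have hpow : ∀ k : ℕ, f ^ k = 1 ↔ σ ^ k = 1 := by
    intro k
    have h : ((σ ^ k : (ℂ × ℂ) ≃ₗ[ℂ] (ℂ × ℂ)) : (ℂ × ℂ) →ₗ[ℂ] (ℂ × ℂ)) = f ^ k :=
      map_pow (LinearEquiv.automorphismGroup.toLinearMapMonoidHom (R := ℂ) (M := ℂ × ℂ)) σ k
    rw [← h]
    exact LinearEquiv.toLinearMap_inj (e₁ := σ ^ k) (e₂ := 1)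
  have hfd : f ^ d = 1 := (hpow d).mpr (hord ▸ pow_orderOf_eq_one σ)
  obtain ⟨t, ht⟩ := exists_mul_self_eq_smul_sub_one f hsymp
  obtain ⟨r, rfl, hr⟩ := exists_real_of_mul_self_eq f ht hd hfd
  obtain ⟨n, rfl⟩ : ∃ n : ℤ, r = n := by
    refine exists_int_of_smul_mem hΛ r fun v hv => ?_
    have hσ : ∀ w ∈ Λ, σ w ∈ Λ := fun w hw => hσΛ.le ⟨w, hw, rfl⟩
    obtain ⟨w, hw, rfl⟩ := hσΛ.ge hv
    have h := LinearMap.congr_fun ht w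
    have h' : σ (σ w) = (r : ℂ) • σ w - w := h
    have : r • σ w = σ (σ w) + w := by
      rw [h', sub_add_cancel]
      exact (Complex.coe_smul r (σ w)).symm
    change r • σ w ∈ Λ
    rw [this]
    exact Λ.add_mem (hσ _ (hσ _ hw)) hw
  have hn : |n| ≤ 2 := by exact_mod_cast hr
  have ht' : f * f = n • f - 1 := by
    rw [ht]
    congr 1
    rw [Complex.ofReal_intCast]
    exact Int.cast_smul_eq_zsmul ℂ n f
  have hdvd : d ∣ 4 ∨ d ∣ 6 := by
    rw [← hord, orderOf_dvd_iff_pow_eq_one, orderOf_dvd_iff_pow_eq_one, ← hpow, ← hpow]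
    have : IsAddTorsionFree (Module.End ℂ (ℂ × ℂ)) := .of_module_rat _
    exact pow_four_or_pow_six_eq_one hn ht' hd hfd
  have hle : d ≤ 6 := by
    rcases hdvd with h | h
    · exact (Nat.le_of_dvd (by norm_num) h).trans (by norm_num)
    · exact Nat.le_of_dvd (by norm_num) h
  clear * - hd0 hle hdvd
  interval_cases d <;> simp_all
end
end

section
/- Let r ≥ 2, a ≥ 0 be integers and δ ∈ {0,1}. There exists an even hyperbolic 2-elementary Gram matrix M ∈ M_r(ℤ) of length a with δ(M) = δ if and only if all of the following hold: a ≤ r; r ≡ a (mod 2); if δ = 0 then r ≡ 2 (mod 4); if a = 0 then δ = 0; if a ≤ 1 then r ≡ 2 + a (mod 8) or r ≡ 2 − a (mod 8); if a = 2 and r ≡ 6 (mod 8) then δ = 0; and if δ = 0 and a = r then r ≡ 2 (mod 8). -/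
open Matrix

/-- `M` is the Gram matrix of a hyperbolic lattice, i.e. of signature `(1, r-1)`: over `ℝ`
it is congruent to `diag(1, -1, …, -1)`. -/
def IsHyperbolicGram {r : ℕ} (M : Matrix (Fin r) (Fin r) ℤ) : Prop :=
  ∃ P : Matrix (Fin r) (Fin r) ℝ, IsUnit P.det ∧
    Pᵀ * (M.map (Int.cast : ℤ → ℝ)) * P =
      Matrix.diagonal (fun i : Fin r => if (i : ℕ) = 0 then (1 : ℝ) else -1)

/-- `M` is `q`-elementary of length `a`: the cokernel of `M : ℤ^r → ℤ^r` is isomorphic to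
`(ℤ/qℤ)^a`. -/
def ElemOfLength {r : ℕ} (q a : ℕ) (M : Matrix (Fin r) (Fin r) ℤ) : Prop :=
  Nonempty (((Fin r → ℤ) ⧸ LinearMap.range M.mulVecLin) ≃ₗ[ℤ] (Fin a → ZMod q))

/-- `δ(M) = 0`, i.e. `zᵀ M⁻¹ z ∈ ℤ` for every integer vector `z`. -/
def DeltaZero {r : ℕ} (M : Matrix (Fin r) (Fin r) ℤ) : Prop :=
  ∀ z : Fin r → ℤ, ∃ n : ℤ,
    (fun i => (z i : ℚ)) ⬝ᵥ ((M.map (Int.cast : ℤ → ℚ))⁻¹ *ᵥ fun i => (z i : ℚ)) = (n : ℚ)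

lemma summable_exp_neg_mul_int_sq {t : ℝ} (ht : 0 < t) :
    Summable fun n : ℤ => Real.exp (-Real.pi * t * (n : ℝ) ^ 2) := by
  have h := ((summable_jacobiTheta₂_term_iff 0 (t * Complex.I)).2 (by simpa using ht)).norm
  refine h.congr fun n => ?_
  rw [norm_jacobiTheta₂_term]
  simp only [Complex.mul_im, Complex.ofReal_re, Complex.I_im, Complex.ofReal_im, Complex.I_re,
    Complex.zero_im]
  ring_nf

open Filter Topology Complex in
/-- A family of series over `ℤ` dominated by Gaussians `exp (-π t n²)` tends to its constant term
as `t → ∞`. -/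
lemma tendsto_tsum_of_gaussian_bound {α : Type*} {l : Filter α} {t : α → ℝ} {u : α → ℤ → ℂ}
    (ht : Tendsto t l atTop) (h0 : ∀ x, u x 0 = 1)
    (hu : ∀ x n, ‖u x n‖ ≤ Real.exp (-Real.pi * t x * (n : ℝ) ^ 2)) :
    Tendsto (fun x => ∑' n, u x n) l (𝓝 1) := by
  have key := tendsto_tsum_of_dominated_convergence (f := u) (𝓕 := l)
    (g := fun n : ℤ => if n = 0 then (1 : ℂ) else 0)
    (summable_exp_neg_mul_int_sq one_pos) ?_ ?_
  · simpa using key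
  · intro n
    by_cases hn : n = 0
    · subst hn; simpa [h0] using tendsto_const_nhds
    · simp only [hn, if_false]
      rw [tendsto_zero_iff_norm_tendsto_zero]
      refine squeeze_zero (fun _ => norm_nonneg _) (fun x => hu x n) ?_
      refine Real.tendsto_exp_atBot.comp ?_
      have hc : -Real.pi * (n : ℝ) ^ 2 < 0 := by
        have : (0 : ℝ) < (n : ℝ) ^ 2 := by positivity
        nlinarith [Real.pi_pos]
      refine (ht.const_mul_atTop_of_neg hc).congr fun x => by ring
  · filter_upwards [ht.eventually_ge_atTop 1] with x hx n
    refine (hu x n).trans (Real.exp_le_exp.2 ?_)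
    have : 0 ≤ Real.pi * (n : ℝ) ^ 2 := by positivity
    nlinarith

open Filter Topology Complex in
lemma tendsto_sqrt_mul_tsum_residue {N : ℕ} (hN : 0 < N) (r : ℤ) :
    Tendsto (fun w : ℝ => (√w : ℂ) * ∑' m : ℤ, cexp (-Real.pi * w * ((m * N + r : ℤ) : ℂ) ^ 2))
      (𝓝[>] 0) (𝓝 (1 / N)) := by
  have hN' : (N : ℂ) ≠ 0 := by exact_mod_cast hN.ne'
  have hNr : (0 : ℝ) < N := by exact_mod_cast hN
  have lim : Tendsto (fun w : ℝ => ∑' n : ℤ,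
      cexp (-Real.pi * ((w * N ^ 2)⁻¹ : ℝ) * n ^ 2 + ((2 * Real.pi * n * r / N : ℝ) : ℂ) * I))
      (𝓝[>] 0) (𝓝 1) := by
    refine tendsto_tsum_of_gaussian_bound (t := fun w : ℝ => (w * N ^ 2)⁻¹) ?_ ?_ ?_
    · simp_rw [mul_inv]
      exact tendsto_inv_nhdsGT_zero.atTop_mul_const (by positivity)
    · intro x; simp
    · intro w n
      rw [Complex.norm_exp, add_re, re_ofReal_mul, I_re, mul_zero, add_zero]
      refine le_of_eq (congrArg Real.exp ?_)
      have : (-Real.pi * ((w * N ^ 2)⁻¹ : ℝ) * (n : ℂ) ^ 2 : ℂ)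
        = ((-Real.pi * (w * N ^ 2)⁻¹ * (n : ℝ) ^ 2 : ℝ) : ℂ) := by push_cast; ring
      rw [this, ofReal_re]
  have := (lim.const_mul (1 / (N : ℂ)))
  rw [mul_one] at this
  refine this.congr' ?_
  filter_upwards [self_mem_nhdsWithin] with w hw
  have hw : (0 : ℝ) < w := hw
  have hwc : (w : ℂ) ≠ 0 := by exact_mod_cast hw.ne'
  have hq := Complex.tsum_exp_neg_quadratic (a := ((w * N ^ 2 : ℝ) : ℂ))
    (by rw [ofReal_re]; positivity) (-(w * N * r : ℂ))
  have hroot : ((w * N ^ 2 : ℝ) : ℂ) ^ (1 / 2 : ℂ) = √w * N := by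
    have : √(w * N ^ 2) = √w * N := by
      rw [Real.sqrt_mul hw.le, Real.sqrt_sq hNr.le]
    rw [show (1 / 2 : ℂ) = ((1 / 2 : ℝ) : ℂ) by norm_num, ← ofReal_cpow (by positivity),
      ← Real.sqrt_eq_rpow, this]
    push_cast; rfl
  have hL : ∀ m : ℤ, cexp (-Real.pi * w * ((m * N + r : ℤ) : ℂ) ^ 2)
      = cexp (-Real.pi * w * r ^ 2) *
        cexp (-Real.pi * (w * N ^ 2 : ℝ) * m ^ 2 + 2 * Real.pi * -(w * N * r : ℂ) * m) := by
    intro m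
    rw [← Complex.exp_add]; congr 1; push_cast; ring
  have hR : ∀ n : ℤ, cexp (-Real.pi * ((w * N ^ 2)⁻¹ : ℝ) * n ^ 2
      + ((2 * Real.pi * n * r / N : ℝ) : ℂ) * I) = cexp (-Real.pi * w * r ^ 2) *
      cexp (-Real.pi / (w * N ^ 2 : ℝ) * (n + I * -(w * N * r : ℂ)) ^ 2) := by
    intro n
    rw [← Complex.exp_add]; congr 1; push_cast; field_simp
    linear_combination ((w : ℂ) ^ 2 * N ^ 2 * r ^ 2) * I_sq
  simp_rw [hL, hR, tsum_mul_left, hq, hroot]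
  have hs : (√w : ℂ) ≠ 0 := by exact_mod_cast (Real.sqrt_pos.2 hw).ne'
  field_simp

open Filter Topology Complex in
lemma tendsto_sqrt_mul_tsum_periodic {N : ℕ} (hN : 0 < N) {c : ℤ → ℂ}
    (hc : ∀ m r : ℤ, c (m * N + r) = c r) :
    Tendsto (fun w : ℝ => (√w : ℂ) * ∑' m : ℤ, c m * cexp (-Real.pi * w * (m : ℂ) ^ 2))
      (𝓝[>] 0) (𝓝 ((∑ r : Fin N, c r) / N)) := by
  have : NeZero N := ⟨hN.ne'⟩
  have key := tendsto_finsetSum (Finset.univ : Finset (Fin N)) fun r _ =>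
    (tendsto_sqrt_mul_tsum_residue hN (r : ℤ)).const_mul (c r)
  rw [← Finset.sum_mul, mul_one_div] at key
  refine key.congr' ?_
  filter_upwards [self_mem_nhdsWithin] with w hw
  have hw : (0 : ℝ) < w := hw
  have hs : Summable fun m : ℤ => c m * cexp (-Real.pi * w * (m : ℂ) ^ 2) := by
    refine Summable.of_norm_bounded (g := fun m : ℤ => (∑ r : Fin N, ‖c r‖) *
      Real.exp (-Real.pi * w * (m : ℝ) ^ 2)) ((summable_exp_neg_mul_int_sq hw).mul_left _) ?_
    intro m
    rw [norm_mul, Complex.norm_exp]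
    have h1 : (-Real.pi * w * (m : ℂ) ^ 2).re = -Real.pi * w * (m : ℝ) ^ 2 := by
      have : (-Real.pi * w * (m : ℂ) ^ 2) = ((-Real.pi * w * (m : ℝ) ^ 2 : ℝ) : ℂ) := by
        push_cast; ring
      rw [this, ofReal_re]
    rw [h1]
    refine mul_le_mul_of_nonneg_right ?_ (Real.exp_pos _).le
    obtain ⟨⟨q, r⟩, rfl⟩ := (Int.divModEquiv N).symm.surjective m
    rw [Int.divModEquiv_symm_apply, hc]
    exact Finset.single_le_sum (f := fun r : Fin N => ‖c r‖) (fun _ _ => norm_nonneg _)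
      (Finset.mem_univ r)
  obtain ⟨e, he⟩ : ∃ e : Fin N × ℤ ≃ ℤ, ∀ p, e p = p.2 * N + ((p.1 : ℕ) : ℤ) :=
    ⟨(Equiv.prodComm _ _).trans (Int.divModEquiv N).symm,
      fun p => Int.divModEquiv_symm_apply N (p.2, p.1)⟩
  have hse : Summable fun p : Fin N × ℤ => c (e p) * cexp (-Real.pi * w * (e p : ℂ) ^ 2) :=
    e.summable_iff.2 hs
  rw [← e.tsum_eq, hse.tsum_prod, tsum_fintype, Finset.mul_sum]
  refine Finset.sum_congr rfl fun r _ => ?_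
  simp_rw [he, hc, tsum_mul_left]
  ring

open Complex in
lemma ofReal_mul_cpow_half {r : ℝ} (hr : 0 < r) {x : ℂ} (hx : x ≠ 0) :
    ((r : ℂ) * x) ^ (1 / 2 : ℂ) = √r * x ^ (1 / 2 : ℂ) := by
  have hr' : (r : ℂ) ≠ 0 := by exact_mod_cast hr.ne'
  have hs : (√r : ℂ) = (r : ℂ) ^ (1 / 2 : ℂ) := by
    rw [Real.sqrt_eq_rpow, ofReal_cpow hr.le]; norm_num
  rw [hs, cpow_def_of_ne_zero (mul_ne_zero hr' hx), log_ofReal_mul hr hx, add_mul, Complex.exp_add,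
    cpow_def_of_ne_zero hr', cpow_def_of_ne_zero hx, ofReal_log hr.le]

open Filter Topology Complex in
/-- Evaluation of the quadratic Gauss sum of `e^{π i x² / D}` for even `D > 0`, over any multiple
`N` of the period `D`. -/
lemma sum_exp_sq_div_of_pos {D N : ℕ} (hD : 0 < D) (hE : Even D) (hN : 0 < N) (hDN : D ∣ N) :
    ∑ r : Fin N, cexp (Real.pi * I * ((r : ℕ) : ℂ) ^ 2 / D)
      = (N / √D : ℝ) * cexp (Real.pi * I / 4) := by
  have hDc : (D : ℂ) ≠ 0 := by exact_mod_cast hD.ne'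
  have hDr : (0 : ℝ) < D := by exact_mod_cast hD
  have hNc : (N : ℂ) ≠ 0 := by exact_mod_cast hN.ne'
  obtain ⟨k, hk⟩ := hDN
  obtain ⟨d, hd⟩ := hE
  have hper : ∀ m r : ℤ, cexp (Real.pi * I * ((m * N + r : ℤ) : ℂ) ^ 2 / D)
      = cexp (Real.pi * I * (r : ℂ) ^ 2 / D) := by
    intro m r
    rw [Complex.exp_eq_exp_iff_exists_int]
    refine ⟨m ^ 2 * k ^ 2 * d + m * k * r, ?_⟩
    rw [hk]
    push_cast
    field_simp
    rw [show (D : ℂ) = d + d by exact_mod_cast hd]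
    ring
  have hl := tendsto_sqrt_mul_tsum_periodic hN
    (c := fun m : ℤ => cexp (Real.pi * I * (m : ℂ) ^ 2 / D)) hper
  have hlim : Tendsto (fun w : ℝ => ∑' n : ℤ,
      cexp (-Real.pi * ((w * D ^ 2)⁻¹ : ℝ) * n ^ 2 + ((-Real.pi * n ^ 2 / D : ℝ) : ℂ) * I))
      (𝓝[>] 0) (𝓝 1) := by
    refine tendsto_tsum_of_gaussian_bound (t := fun w : ℝ => (w * D ^ 2)⁻¹) ?_ ?_ ?_
    · simp_rw [mul_inv]
      exact tendsto_inv_nhdsGT_zero.atTop_mul_const (by positivity)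
    · intro x; simp
    · intro w n
      rw [Complex.norm_exp, add_re, re_ofReal_mul, I_re, mul_zero, add_zero]
      refine le_of_eq (congrArg Real.exp ?_)
      have : (-Real.pi * ((w * D ^ 2)⁻¹ : ℝ) * (n : ℂ) ^ 2 : ℂ)
        = ((-Real.pi * (w * D ^ 2)⁻¹ * (n : ℝ) ^ 2 : ℝ) : ℂ) := by push_cast; ring
      rw [this, ofReal_re]
  have hsl : (-I / D : ℂ) ∈ slitPlane := by
    rw [mem_slitPlane_iff]; right
    have : (-I / D : ℂ) = ((-(1 / D) : ℝ) : ℂ) * I := by push_cast; ring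
    rw [this, im_ofReal_mul, I_im]
    have : (0 : ℝ) < 1 / D := by positivity
    linarith [this]
  have hc1 : Tendsto (fun w : ℝ => ((w : ℂ) - I / D) ^ (1 / 2 : ℂ)) (𝓝[>] 0)
      (𝓝 ((-I / D) ^ (1 / 2 : ℂ))) := by
    refine Tendsto.cpow ?_ tendsto_const_nhds hsl
    have : Continuous fun w : ℝ => (w : ℂ) - I / D := by fun_prop
    refine (this.tendsto' 0 _ ?_).mono_left nhdsWithin_le_nhds
    push_cast; ring
  have hDD : ((D : ℂ) ^ 2) = ((D ^ 2 : ℝ) : ℂ) := by push_cast; ring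
  have hc2 : Tendsto (fun w : ℝ => ((D : ℂ) ^ 2 / (1 + I * D * w)) ^ (1 / 2 : ℂ)) (𝓝[>] 0)
      (𝓝 (D : ℂ)) := by
    have hroot : ((D : ℂ) ^ 2) ^ (1 / 2 : ℂ) = D := by
      rw [hDD, show (1 / 2 : ℂ) = ((1 / 2 : ℝ) : ℂ) by norm_num, ← ofReal_cpow (by positivity),
        ← Real.sqrt_eq_rpow, Real.sqrt_sq hDr.le]
      simp
    suffices h : Tendsto (fun w : ℝ => ((D : ℂ) ^ 2 / (1 + I * D * w)) ^ (1 / 2 : ℂ)) (𝓝[>] 0)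
        (𝓝 (((D : ℂ) ^ 2) ^ (1 / 2 : ℂ))) by rwa [hroot] at h
    refine Tendsto.cpow ?_ tendsto_const_nhds ?_
    · have h1 : Continuous fun w : ℝ => (1 + I * D * w : ℂ) := by fun_prop
      have h2 := (h1.tendsto' 0 1 (by simp)).mono_left (nhdsWithin_le_nhds (s := Set.Ioi 0))
      have h3 := (tendsto_const_nhds (x := (D : ℂ) ^ 2)).div h2 one_ne_zero
      rw [div_one] at h3
      exact h3
    · rw [mem_slitPlane_iff]; left
      rw [hDD, ofReal_re]; positivity
  have hne : (-I / D : ℂ) ^ (1 / 2 : ℂ) ≠ 0 := by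
    rw [Ne, cpow_eq_zero_iff]; simp [hDc]
  have hr := ((hc1.inv₀ hne).mul (hc2.inv₀ hDc)).mul hlim
  have heq := tendsto_nhds_unique_of_eventuallyEq hl hr ?_
  · have hval : ((-I / D : ℂ) ^ (1 / 2 : ℂ)) * (√D : ℂ) = cexp (-(Real.pi * I / 4)) := by
      have h1 : (-I / D : ℂ) = ((1 / D : ℝ) : ℂ) * (-I) := by push_cast; ring
      rw [h1, ofReal_mul_cpow_half (by positivity) (by simp), cpow_def_of_ne_zero (by simp),
        log_neg_I, mul_right_comm, ← ofReal_mul, ← Real.sqrt_mul (by positivity),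
        one_div_mul_cancel hDr.ne', Real.sqrt_one, ofReal_one, one_mul]
      congr 1; ring
    have hsD : (√D : ℂ) ≠ 0 := by exact_mod_cast (Real.sqrt_pos.2 hDr).ne'
    have hsq : (√D : ℂ) * √D = D := by
      rw [← ofReal_mul, Real.mul_self_sqrt hDr.le]; simp
    rw [← eq_div_iff hsD, Complex.exp_neg] at hval
    rw [mul_one, div_eq_iff hNc, hval] at heq
    have hx := Complex.exp_ne_zero (Real.pi * I / 4)
    simp only [Int.cast_natCast] at heq
    rw [heq]
    push_cast
    field_simp
    rw [← hsq]
    field_simp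
  · filter_upwards [self_mem_nhdsWithin] with w hw
    have hw : (0 : ℝ) < w := hw
    have hwc : (w : ℂ) ≠ 0 := by exact_mod_cast hw.ne'
    have hs : (√w : ℂ) ≠ 0 := by exact_mod_cast (Real.sqrt_pos.2 hw).ne'
    have h1 : (1 + I * D * w : ℂ) ≠ 0 := by
      intro h; have := congrArg re h; simp at this
    have h2 : ((w : ℂ) - I / D) ≠ 0 := by
      intro h
      apply h1
      field_simp at h
      linear_combination I * h + I_sq
    have q1 := Complex.tsum_exp_neg_mul_int_sq (a := (w : ℂ) - I / D) (by
      have : (w : ℂ) - I / D = w + ((-(1 / D) : ℝ) : ℂ) * I := by push_cast; ring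
      rw [this, add_re, re_ofReal_mul, I_re, ofReal_re]; linarith)
    have hinv : (w * (D ^ 2 / (1 + I * D * w)) : ℂ)
        = ((((w * D ^ 2)⁻¹ : ℝ) : ℂ) + ((1 / D : ℝ) : ℂ) * I)⁻¹ := by
      rw [← _root_.inv_inj, inv_inv]
      push_cast
      field_simp
    have q2 := Complex.tsum_exp_neg_mul_int_sq (a := w * (D ^ 2 / (1 + I * D * w))) (by
      rw [hinv, Complex.inv_re]
      refine div_pos ?_ (normSq_pos.2 fun h => ?_)
      · rw [add_re, re_ofReal_mul, I_re, ofReal_re, mul_zero, add_zero]; positivity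
      · have := congrArg re h
        rw [add_re, re_ofReal_mul, I_re, ofReal_re, mul_zero, add_zero] at this
        exact absurd this (by rw [zero_re]; positivity))
    have hcp : ((w : ℂ) * (D ^ 2 / (1 + I * D * w))) ^ (1 / 2 : ℂ)
        = √w * (D ^ 2 / (1 + I * D * w)) ^ (1 / 2 : ℂ) :=
      ofReal_mul_cpow_half hw (div_ne_zero (pow_ne_zero _ hDc) h1)
    rw [hcp] at q2
    have e1 : ∀ m : ℤ, cexp (Real.pi * I * (m : ℂ) ^ 2 / D) * cexp (-Real.pi * w * (m : ℂ) ^ 2)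
        = cexp (-Real.pi * ((w : ℂ) - I / D) * (m : ℂ) ^ 2) := by
      intro m; rw [← Complex.exp_add]; congr 1; ring
    have e2 : ∀ m : ℤ, cexp (-Real.pi / ((w : ℂ) - I / D) * (m : ℂ) ^ 2)
        = cexp (-Real.pi * (w * (D ^ 2 / (1 + I * D * w))) * (m : ℂ) ^ 2) := by
      intro m
      rw [Complex.exp_eq_exp_iff_exists_int]
      refine ⟨-(m ^ 2 * d), ?_⟩
      have h3 : (-Real.pi : ℂ) / ((w : ℂ) - I / D) = -Real.pi * (I * D / (1 + I * D * w)) := by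
        rw [div_eq_mul_inv]
        congr 1
        rw [inv_eq_iff_eq_inv, inv_div]
        field_simp
        linear_combination -I_sq
      have h4 : (I * D / (1 + I * D * w) : ℂ) = w * (D ^ 2 / (1 + I * D * w)) + I * D := by
        field_simp
        linear_combination (-(D : ℂ) * w) * I_sq
      rw [h3, h4]
      push_cast
      rw [show (D : ℂ) = d + d by exact_mod_cast hd]
      ring
    have e3 : ∀ m : ℤ, cexp (-Real.pi / (w * (D ^ 2 / (1 + I * D * w))) * (m : ℂ) ^ 2)
        = cexp (-Real.pi * ((w * D ^ 2)⁻¹ : ℝ) * m ^ 2 + ((-Real.pi * m ^ 2 / D : ℝ) : ℂ) * I) := by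
      intro m
      congr 1
      push_cast
      field_simp
      ring
    simp_rw [e1, q1, e2, q2, e3]
    field_simp

/-- The phase `e^{π i a / N}`. -/
noncomputable def phase (N : ℕ) (a : ℤ) : ℂ := Complex.exp (Real.pi * Complex.I * a / N)

lemma phase_add (N : ℕ) (a b : ℤ) : phase N (a + b) = phase N a * phase N b := by
  rw [phase, phase, phase, ← Complex.exp_add]
  congr 1; push_cast; ring

lemma phase_zero (N : ℕ) : phase N 0 = 1 := by simp [phase]

lemma phase_eq_one_iff {N : ℕ} (hN : 0 < N) (a : ℤ) : phase N a = 1 ↔ (2 * N : ℤ) ∣ a := by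
  have hNc : (N : ℂ) ≠ 0 := by exact_mod_cast hN.ne'
  have hpi : (Real.pi : ℂ) ≠ 0 := by exact_mod_cast Real.pi_ne_zero
  rw [phase, Complex.exp_eq_one_iff]
  refine exists_congr fun k => ?_
  rw [div_eq_iff hNc, ← Int.cast_inj (α := ℂ)]
  constructor
  · intro h
    have h2 : (Real.pi * Complex.I) * (a : ℂ) = (Real.pi * Complex.I) * (2 * N * k) := by
      linear_combination h
    have := mul_left_cancel₀ (mul_ne_zero hpi Complex.I_ne_zero) h2
    rw [this]; push_cast; ring
  · intro h
    rw [h]; push_cast; ring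

section
variable {ι : Type*}

/-- The representative with entries in `[0, N)` of a vector modulo `N`. -/
def zlift {N : ℕ} (x : ι → ZMod N) : ι → ℤ := fun i => ((x i).val : ℤ)

lemma intCast_zlift {N : ℕ} [NeZero N] (x : ι → ZMod N) (i : ι) :
    ((zlift x i : ℤ) : ZMod N) = x i := by
  simp [zlift]

lemma exists_zlift_eq_add {N : ℕ} [NeZero N] (x : ι → ZMod N) (y : ι → ℤ)
    (h : ∀ i, ((y i : ℤ) : ZMod N) = x i) : ∃ k : ι → ℤ, zlift x = y + (N : ℤ) • k := by
  have : ∀ i, ∃ k : ℤ, zlift x i = y i + N * k := by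
    intro i
    have h1 : ((zlift x i - y i : ℤ) : ZMod N) = 0 := by
      push_cast; rw [intCast_zlift, h]; ring
    obtain ⟨k, hk⟩ := (ZMod.intCast_zmod_eq_zero_iff_dvd _ N).1 h1
    exact ⟨k, by linarith⟩
  choose k hk using this
  exact ⟨k, funext fun i => by simp [hk]⟩

/-- A function on `ι → ℤ` is periodic modulo `N`. -/
def ModPeriodic {α : Type*} (N : ℕ) (f : (ι → ℤ) → α) : Prop :=
  ∀ y k : ι → ℤ, f (y + (N : ℤ) • k) = f y

lemma ModPeriodic.zlift_eq {α : Type*} {N : ℕ} [NeZero N] {f : (ι → ℤ) → α}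
    (hf : ModPeriodic N f) (x : ι → ZMod N) (y : ι → ℤ) (h : ∀ i, ((y i : ℤ) : ZMod N) = x i) :
    f (zlift x) = f y := by
  obtain ⟨k, hk⟩ := exists_zlift_eq_add x y h
  rw [hk, hf]

variable [Fintype ι]

lemma dotProduct_mulVec_add {X : Matrix ι ι ℤ} (hX : X.IsSymm) (y h : ι → ℤ) :
    (y + h) ⬝ᵥ X *ᵥ (y + h) = y ⬝ᵥ X *ᵥ y + h ⬝ᵥ X *ᵥ h + 2 * (y ⬝ᵥ X *ᵥ h) := by
  have : h ⬝ᵥ X *ᵥ y = y ⬝ᵥ X *ᵥ h := by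
    rw [dotProduct_mulVec, ← mulVec_transpose, hX.eq, dotProduct_comm]
  rw [mulVec_add, add_dotProduct, dotProduct_add, dotProduct_add, this]
  ring

lemma mulVec_dotProduct_mulVec (A B C : Matrix ι ι ℤ) (y z : ι → ℤ) :
    (A *ᵥ y) ⬝ᵥ B *ᵥ (C *ᵥ z) = y ⬝ᵥ (Aᵀ * B * C) *ᵥ z := by
  rw [← mulVec_mulVec, ← mulVec_mulVec, ← vecMul_transpose, ← dotProduct_mulVec]

variable [DecidableEq ι]

lemma mul_cancel_of_det_ne_zero {A B C : Matrix ι ι ℤ} (hA : A.det ≠ 0) (h : A * B = A * C) :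
    B = C := by
  have h1 := congrArg (A.adjugate * ·) h
  simp only [← Matrix.mul_assoc, adjugate_mul, smul_mul, Matrix.one_mul] at h1
  exact smul_right_injective _ hA h1

lemma mul_eq_smul_one_comm {A B : Matrix ι ι ℤ} {c : ℤ} (hc : c ≠ 0)
    (h : A * B = c • (1 : Matrix ι ι ℤ)) : B * A = c • (1 : Matrix ι ι ℤ) := by
  have hA : A.det ≠ 0 := by
    intro h0
    have := congrArg det h
    rw [det_mul, h0, zero_mul, det_smul, det_one, mul_one] at this
    exact pow_ne_zero _ hc this.symm
  refine mul_cancel_of_det_ne_zero hA ?_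
  rw [← Matrix.mul_assoc, h, Matrix.smul_mul, Matrix.mul_smul, Matrix.one_mul, Matrix.mul_one]

lemma ModPeriodic.sum_shift {N : ℕ} [NeZero N] {f : (ι → ℤ) → ℂ} (hf : ModPeriodic N f)
    (h : ι → ℤ) :
    ∑ x : ι → ZMod N, f (zlift x + h) = ∑ x : ι → ZMod N, f (zlift x) := by
  have he := _root_.Equiv.sum_comp (Equiv.addRight (fun i => ((h i : ℤ) : ZMod N)))
    fun x : ι → ZMod N => f (zlift x)
  rw [← he]
  refine Finset.sum_congr rfl fun x _ => (hf.zlift_eq _ _ fun i => ?_).symm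
  simp [intCast_zlift]

/-- Summing a function pulled back along a homomorphism of finite groups. -/
lemma exists_sum_comp_hom {G H : Type*} [AddGroup G] [AddGroup H] [Fintype G] [Fintype H]
    [DecidableEq H] (φ : G →+ H) (F : H → ℂ) : ∃ k : ℕ, 0 < k ∧
      ∑ g, F (φ g) = k * ∑ h with h ∈ φ.range, F h := by
  refine ⟨(Finset.univ.filter fun g => φ g = 0).card, Finset.card_pos.2 ⟨0, by simp⟩, ?_⟩
  rw [← Finset.sum_fiberwise_of_maps_to (s := Finset.univ) (t := Finset.univ.filter (· ∈ φ.range))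
    (g := φ) (by simp), Finset.mul_sum]
  refine Finset.sum_congr rfl fun h hh => ?_
  rw [Finset.sum_congr rfl (g := fun _ => F h) (by intro x hx; simp at hx; rw [hx]),
    Finset.sum_const, nsmul_eq_mul]
  congr 2
  simp only [Finset.mem_filter, Finset.mem_univ, true_and] at hh
  exact AddMonoidHom.card_fiber_eq_of_mem_range φ hh ⟨0, map_zero φ⟩

/-- Orthogonality: the sum over `h` modulo `N` of the character `e^{2π i ⟨w, h⟩ / N}`. -/
lemma sum_phase_dotProduct {N : ℕ} [NeZero N] (w : ι → ℤ) :
    ∑ h : ι → ZMod N, phase N (2 * (w ⬝ᵥ zlift h))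
      = if ∀ i, (N : ℤ) ∣ w i then (N : ℂ) ^ Fintype.card ι else 0 := by
  have hN : 0 < N := NeZero.pos N
  split_ifs with hw
  · have : ∀ h : ι → ZMod N, phase N (2 * (w ⬝ᵥ zlift h)) = 1 := fun h => by
      rw [phase_eq_one_iff hN]
      exact mul_dvd_mul_left _ (Finset.dvd_sum fun i _ => (hw i).mul_right _)
    simp [this, ZMod.card]
  · push Not at hw
    obtain ⟨i, hi⟩ := hw
    have hper : ModPeriodic N fun h : ι → ℤ => phase N (2 * (w ⬝ᵥ h)) := by
      intro y k
      have h1 : phase N (2 * (N * (w ⬝ᵥ k))) = 1 := (phase_eq_one_iff hN _).2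
        ⟨w ⬝ᵥ k, by ring⟩
      simp only [dotProduct_add, dotProduct_smul, smul_eq_mul, mul_add, phase_add, h1, mul_one]
    have hs := hper.sum_shift (Pi.single i 1)
    simp only [dotProduct_add, mul_add, phase_add, ← Finset.sum_mul, dotProduct_single, mul_one]
      at hs
    have hne : phase N (2 * w i) ≠ 1 := by
      rw [Ne, phase_eq_one_iff hN]
      intro hd
      exact hi ((mul_dvd_mul_iff_left two_ne_zero).1 hd)
    have h0 : (∑ h : ι → ZMod N, phase N (2 * (w ⬝ᵥ zlift h))) * (phase N (2 * w i) - 1) = 0 := by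
      rw [mul_sub, hs, mul_one, sub_self]
    exact (mul_eq_zero.1 h0).resolve_right (sub_ne_zero.2 hne)

/-- The function `y ↦ e^{π i yᵀ M⁻¹ y}`, where `M * X = N`, is invariant under translation by the
lattice `M ℤ^n` when `M` is even. -/
lemma phase_add_mulVec {M X : Matrix ι ι ℤ} {N : ℕ} (hN : 0 < N) (hX : X.IsSymm)
    (hM : ∀ y, Even (y ⬝ᵥ M *ᵥ y)) (hXM : X * M = (N : ℤ) • (1 : Matrix ι ι ℤ))
    (y h : ι → ℤ) :
    phase N ((y + M *ᵥ h) ⬝ᵥ X *ᵥ (y + M *ᵥ h)) = phase N (y ⬝ᵥ X *ᵥ y) := by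
  have h1 : X *ᵥ (M *ᵥ h) = (N : ℤ) • h := by
    rw [mulVec_mulVec, hXM, smul_mulVec, one_mulVec]
  rw [dotProduct_mulVec_add hX, h1, dotProduct_smul, dotProduct_smul, phase_add, phase_add,
    (phase_eq_one_iff hN (2 * _)).2 ⟨y ⬝ᵥ h, by simp; ring⟩,
    (phase_eq_one_iff hN ((N : ℤ) • _)).2, mul_one, mul_one]
  obtain ⟨k, hk⟩ := hM h
  refine ⟨k, ?_⟩
  rw [dotProduct_comm, hk]; simp; ring

lemma modPeriodic_phase {M X : Matrix ι ι ℤ} {N : ℕ} (hN : 0 < N) (hX : X.IsSymm)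
    (hM : ∀ y, Even (y ⬝ᵥ M *ᵥ y)) (hMX : M * X = (N : ℤ) • (1 : Matrix ι ι ℤ))
    (hXM : X * M = (N : ℤ) • (1 : Matrix ι ι ℤ)) :
    ModPeriodic N fun y : ι → ℤ => phase N (y ⬝ᵥ X *ᵥ y) := by
  intro y k
  have : (N : ℤ) • k = M *ᵥ (X *ᵥ k) := by
    rw [mulVec_mulVec, hMX, smul_mulVec, one_mulVec]
  simp only [this]
  exact phase_add_mulVec hN hX hM hXM y _

/-- Passing to the sublattice `P ℤ^n` multiplies the Gauss sum of the discriminant form by a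
positive constant. -/
lemma exists_sum_phase_sublattice {M P X : Matrix ι ι ℤ} {N : ℕ} [NeZero N]
    (hM : ∀ y, Even (y ⬝ᵥ M *ᵥ y)) (hMs : M.IsSymm) (hX : X.IsSymm) (hP : P.det ≠ 0)
    (hXM : (Pᵀ * M * P) * X = (N : ℤ) • (1 : Matrix ι ι ℤ)) :
    ∃ k : ℕ, 0 < k ∧ ∑ z : ι → ZMod N, phase N (zlift z ⬝ᵥ (P * X * Pᵀ) *ᵥ zlift z)
      = k * ∑ x : ι → ZMod N, phase N (zlift x ⬝ᵥ X *ᵥ zlift x) := by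
  have hN : 0 < N := NeZero.pos N
  have hNz : (N : ℤ) ≠ 0 := by exact_mod_cast hN.ne'
  have hXM' := mul_eq_smul_one_comm hNz hXM
  have hM' : ∀ y, Even (y ⬝ᵥ (Pᵀ * M * P) *ᵥ y) := fun y => by
    rw [← mulVec_dotProduct_mulVec]; exact hM _
  have hper := modPeriodic_phase hN hX hM' hXM hXM'
  set f : (ι → ℤ) → ℂ := fun y => phase N (y ⬝ᵥ X *ᵥ y) with hf
  have hMPX : M * P * X * Pᵀ = (N : ℤ) • (1 : Matrix ι ι ℤ) := by
    refine mul_cancel_of_det_ne_zero (A := Pᵀ) (by rwa [det_transpose]) ?_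
    rw [← Matrix.mul_assoc, ← Matrix.mul_assoc, ← Matrix.mul_assoc, hXM, Matrix.smul_mul,
      Matrix.mul_smul,
      Matrix.one_mul, Matrix.mul_one]
  set Q := M * P * X with hQ
  have hPQ : Pᵀ * Q = (N : ℤ) • (1 : Matrix ι ι ℤ) := by
    rw [hQ, ← Matrix.mul_assoc, ← Matrix.mul_assoc, hXM]
  have hstep : ∀ h : ι → ℤ, ∑ x : ι → ZMod N, f (zlift x)
      = ∑ x : ι → ZMod N, f (zlift x) * phase N (2 * ((Q *ᵥ zlift x) ⬝ᵥ h)) := by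
    intro h
    rw [← hper.sum_shift ((Pᵀ * M) *ᵥ h)]
    refine Finset.sum_congr rfl fun x _ => ?_
    simp only [hf]
    rw [dotProduct_mulVec_add hX, phase_add, phase_add]
    have h1 : ((Pᵀ * M) *ᵥ h) ⬝ᵥ X *ᵥ ((Pᵀ * M) *ᵥ h) = N * (h ⬝ᵥ M *ᵥ h) := by
      rw [mulVec_dotProduct_mulVec, transpose_mul, transpose_transpose, hMs.eq,
        ← Matrix.mul_assoc, hMPX, smul_mul, Matrix.one_mul, smul_mulVec, dotProduct_smul,
        smul_eq_mul]
    have h2 : zlift x ⬝ᵥ X *ᵥ ((Pᵀ * M) *ᵥ h) = (Q *ᵥ zlift x) ⬝ᵥ h := by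
      have := mulVec_dotProduct_mulVec Q 1 1 (zlift x) h
      rw [one_mulVec, one_mulVec, Matrix.mul_one, Matrix.mul_one] at this
      rw [this, hQ, transpose_mul, transpose_mul, hX.eq, hMs.eq, mulVec_mulVec]
    have h3 : phase N (N * (h ⬝ᵥ M *ᵥ h)) = 1 := by
      obtain ⟨k, hk⟩ := hM h
      rw [phase_eq_one_iff hN, hk]
      exact ⟨k, by ring⟩
    rw [h1, h2, h3, mul_one]
  have hsum : ∑ x : ι → ZMod N, f (zlift x)
      = ∑ x : ι → ZMod N with ∀ i, (N : ℤ) ∣ (Q *ᵥ zlift x) i, f (zlift x) := by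
    have h1 : (N : ℂ) ^ Fintype.card ι * ∑ x : ι → ZMod N, f (zlift x)
        = ∑ h : ι → ZMod N, ∑ x : ι → ZMod N,
          f (zlift x) * phase N (2 * ((Q *ᵥ zlift x) ⬝ᵥ zlift h)) := by
      rw [Finset.sum_congr rfl fun h _ => (hstep (zlift h)).symm]
      simp [ZMod.card]
    rw [Finset.sum_comm] at h1
    simp_rw [← Finset.mul_sum, sum_phase_dotProduct] at h1
    have hNc : (N : ℂ) ^ Fintype.card ι ≠ 0 := pow_ne_zero _ (by exact_mod_cast hN.ne')
    refine mul_left_cancel₀ hNc (h1.trans ?_)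
    rw [Finset.sum_filter, Finset.mul_sum]
    refine Finset.sum_congr rfl fun x _ => ?_
    split_ifs <;> ring
  let φ : (ι → ZMod N) →+ (ι → ZMod N) :=
    ((Pᵀ.map (Int.cast : ℤ → ZMod N)).mulVecLin).toAddMonoidHom
  have hφ : ∀ (y : ι → ℤ) (z : ι → ZMod N), (∀ i, ((y i : ℤ) : ZMod N) = z i) →
      ∀ i, (((Pᵀ *ᵥ y) i : ℤ) : ZMod N) = φ z i := by
    intro y z hyz i
    simp [φ, mulVec, dotProduct, hyz]
  obtain ⟨k, hk, hsumk⟩ := exists_sum_comp_hom φ fun x => f (zlift x)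
  refine ⟨k, hk, ?_⟩
  have hl : ∀ z : ι → ZMod N, f (zlift (φ z))
      = phase N (zlift z ⬝ᵥ (P * X * Pᵀ) *ᵥ zlift z) := by
    intro z
    rw [hper.zlift_eq _ (Pᵀ *ᵥ zlift z) (hφ _ _ (intCast_zlift z)), hf]
    simp only [mulVec_dotProduct_mulVec, transpose_transpose]
  simp_rw [hl] at hsumk
  rw [hsumk]
  change (k : ℂ) * _ = k * ∑ x : ι → ZMod N, f (zlift x)
  rw [hsum]
  congr 2
  ext x
  simp only [Finset.mem_filter, Finset.mem_univ, true_and]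
  constructor
  · rintro ⟨z, rfl⟩ i
    obtain ⟨t, ht⟩ := exists_zlift_eq_add (φ z) (Pᵀ *ᵥ zlift z) (hφ _ _ (intCast_zlift z))
    rw [ht, mulVec_add, mulVec_mulVec, hMPX, mulVec_smul, smul_mulVec, one_mulVec]
    simp only [Pi.add_apply, Pi.smul_apply, smul_eq_mul]
    exact dvd_add (dvd_mul_right _ _) (dvd_mul_right _ _)
  · intro h
    choose w hw using h
    have hw' : Q *ᵥ zlift x = (N : ℤ) • w := funext fun i => by simp [hw]
    have h1 : zlift x = Pᵀ *ᵥ w := by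
      have h2 : (N : ℤ) • zlift x = (N : ℤ) • Pᵀ *ᵥ w := by
        rw [← mulVec_smul, ← hw', mulVec_mulVec, hPQ, smul_mulVec, one_mulVec]
      exact smul_right_injective _ hNz h2
    refine ⟨fun i => ((w i : ℤ) : ZMod N), funext fun i => ?_⟩
    rw [← hφ w _ (fun _ => rfl) i, ← h1, intCast_zlift]

end

section
variable {ι : Type*} [Fintype ι]

lemma even_dotProduct_mulVec {M : Matrix ι ι ℤ} (hMs : M.IsSymm) (hM : ∀ i, Even (M i i))
    (y : ι → ℤ) : Even (y ⬝ᵥ M *ᵥ y) := by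
  classical
  have h1 : y ⬝ᵥ M *ᵥ y = ∑ i, ∑ j, y i * M i j * y j := by
    simp only [dotProduct, mulVec, Finset.mul_sum, mul_assoc]
  rw [← ZMod.intCast_eq_zero_iff_even, h1, ← Finset.sum_product']
  push_cast
  refine Finset.sum_involution (fun p _ => (p.2, p.1)) ?_ ?_ ?_ ?_
  · rintro ⟨i, j⟩ _
    have h2 : M j i = M i j := congrFun (congrFun hMs i) j
    simp only [h2]
    have : ((2 : ZMod 2)) = 0 := rfl
    linear_combination (y i * M i j * y j : ZMod 2) * this
  · rintro ⟨i, j⟩ _ h hij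
    simp only [Prod.mk.injEq] at hij
    rw [hij.1, (ZMod.intCast_eq_zero_iff_even).2 (hM i)] at h
    simp at h
  · simp
  · simp

variable [DecidableEq ι]

lemma exists_diagonalization {r : ℕ} (M : Matrix (Fin r) (Fin r) ℤ) (hMs : M.IsSymm) :
    ∃ (P : Matrix (Fin r) (Fin r) ℤ) (d : Fin r → ℤ), P.det ≠ 0 ∧ Pᵀ * M * P = diagonal d := by
  let A : Matrix (Fin r) (Fin r) ℚ := M.map (Int.cast : ℤ → ℚ)
  have hB : LinearMap.IsSymm (Matrix.toBilin' A) := by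
    refine ⟨fun x y => ?_⟩
    simp only [Matrix.toBilin'_apply', RingHom.id_apply]
    have hA : Aᵀ = A := by
      ext i j; simp only [A, transpose_apply, map_apply]; rw [← hMs.apply i j]
    rw [dotProduct_mulVec, ← mulVec_transpose, hA, dotProduct_comm]
  obtain ⟨v, hv⟩ := LinearMap.BilinForm.exists_orthogonal_basis hB
  have hr : Module.finrank ℚ (Fin r → ℚ) = r := by simp
  let b := v.reindex (finCongr hr)
  let Q : Matrix (Fin r) (Fin r) ℚ := (Pi.basisFun ℚ (Fin r)).toMatrix b
  have hQ : Q.det ≠ 0 := by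
    have : IsUnit Q.det := by
      have := (Pi.basisFun ℚ (Fin r)).isUnit_det b
      rwa [Module.Basis.det_apply] at this
    exact this.ne_zero
  have hQA : ∀ i j, i ≠ j → (Qᵀ * A * Q) i j = 0 := by
    intro i j hij
    have h1 : (Qᵀ * A * Q) i j = Matrix.toBilin' A (b i) (b j) := by
      rw [Matrix.toBilin'_apply', Matrix.mul_assoc, Matrix.mul_apply]
      simp only [dotProduct, Matrix.mul_apply, mulVec, transpose_apply, Q,
        Module.Basis.toMatrix_apply, Pi.basisFun_repr]
    rw [h1]
    have := hv (i := (finCongr hr).symm i) (j := (finCongr hr).symm j) (by simpa using hij)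
    simpa [b, Module.Basis.reindex_apply] using this
  have hden : (Q.den : ℚ) ≠ 0 := by exact_mod_cast Q.den_ne_zero
  have hnum : Q.num.map (Int.cast : ℤ → ℚ) = (Q.den : ℚ) • Q := by
    nth_rewrite 3 [← Matrix.inv_denom_smul_num Q]
    rw [smul_smul, mul_inv_cancel₀ hden, one_smul]
  refine ⟨Q.num, fun i => (Q.numᵀ * M * Q.num) i i, ?_, ?_⟩
  · intro h
    have h2 : (Q.num.map (Int.cast : ℤ → ℚ)).det = 0 := by
      have := Int.cast_det (R := ℚ) Q.num
      rw [← this, h]; simp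
    rw [hnum, det_smul] at h2
    exact mul_ne_zero (pow_ne_zero _ hden) hQ h2
  · ext i j
    by_cases hij : i = j
    · subst hij; simp
    · rw [diagonal_apply_ne _ hij]
      have h3 : ((Q.numᵀ * M * Q.num).map (Int.cast : ℤ → ℚ)) i j = 0 := by
        rw [map_mul_intCast, map_mul_intCast, transpose_map, hnum, transpose_smul,
          Matrix.smul_mul, Matrix.mul_smul, Matrix.smul_mul, Matrix.smul_apply, Matrix.smul_apply,
          hQA i j hij]
        simp
      simpa using h3

/-- Sylvester's law of inertia for congruent diagonal matrices. -/
lemma ncard_pos_eq_of_congr {w d : ι → ℝ} {S : Matrix ι ι ℝ} (hS : IsUnit S.det)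
    (h : Sᵀ * diagonal w * S = diagonal d) :
    {i | 0 < d i}.ncard = {i | 0 < w i}.ncard := by
  have he : QuadraticMap.Equivalent (QuadraticMap.weightedSumSquares ℝ d)
      (QuadraticMap.weightedSumSquares ℝ w) := by
    refine ⟨⟨S.toLinearEquiv' (S.invertibleOfIsUnitDet hS), fun x => ?_⟩⟩
    have key : ∀ (u : ι → ℝ) (x : ι → ℝ),
        QuadraticMap.weightedSumSquares ℝ u x = x ⬝ᵥ diagonal u *ᵥ x := by
      intro u x
      simp only [QuadraticMap.weightedSumSquares_apply, dotProduct, mulVec_diagonal, smul_eq_mul]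
      exact Finset.sum_congr rfl fun i _ => by ring
    rw [key, key, ← h]
    change (S *ᵥ x) ⬝ᵥ diagonal w *ᵥ (S *ᵥ x) = _
    rw [← mulVec_mulVec, ← mulVec_mulVec, dotProduct_mulVec x, vecMul_transpose]
  rw [← QuadraticForm.sigPos_weightedSumSquares, he.sigPos_eq,
    QuadraticForm.sigPos_weightedSumSquares]

open Complex in
lemma sum_phase_mul_sq {N : ℕ} [NeZero N] {d q : ℤ} (hd : Even d) (hdq : d * q = N) :
    ∃ c : ℝ, 0 < c ∧ ∑ t : ZMod N, phase N (q * (t.val : ℤ) ^ 2)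
      = c * cexp (Real.pi * I / 4 * (if 0 < d then 1 else -1)) := by
  have hN : 0 < N := NeZero.pos N
  have hNz : (N : ℤ) ≠ 0 := by exact_mod_cast hN.ne'
  have hd0 : d ≠ 0 := by rintro rfl; simp at hdq; exact hNz hdq.symm
  have hD : 0 < d.natAbs := Int.natAbs_pos.2 hd0
  have hDN : d.natAbs ∣ N := by
    have : d ∣ (N : ℤ) := ⟨q, hdq.symm⟩
    simpa using Int.natAbs_dvd_natAbs.2 this
  have hs := sum_exp_sq_div_of_pos hD (Int.natAbs_even.2 hd) hN hDN
  refine ⟨N / √(d.natAbs : ℝ), by positivity, ?_⟩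
  have h1 : ∑ t : ZMod N, phase N (q * (t.val : ℤ) ^ 2)
      = ∑ t : Fin N, cexp (Real.pi * I * ((t : ℕ) : ℂ) ^ 2 / d) := by
    have h0 : ∀ n : ℕ, phase N (q * (n : ℤ) ^ 2) = cexp (Real.pi * I * (n : ℂ) ^ 2 / d) := by
      intro n
      rw [phase]
      have hdc : (d : ℂ) ≠ 0 := by exact_mod_cast hd0
      have hNc : (N : ℂ) ≠ 0 := by exact_mod_cast hN.ne'
      have : (d : ℂ) * q = N := by exact_mod_cast hdq
      congr 1
      push_cast
      rw [div_eq_div_iff hNc hdc, ← this]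
      ring
    simp_rw [h0]
    cases N with
    | zero => exact absurd rfl hN.ne'
    | succ n => rfl
  rw [h1]
  split_ifs with hpos
  · have : ((d.natAbs : ℕ) : ℂ) = d := by
      have : ((d.natAbs : ℕ) : ℤ) = d := by omega
      rw [← Int.cast_natCast, this]
    rw [this] at hs
    rw [hs, mul_one]
  · have : ((d.natAbs : ℕ) : ℂ) = -d := by
      have : ((d.natAbs : ℕ) : ℤ) = -d := by omega
      rw [← Int.cast_natCast, this, Int.cast_neg]
    rw [this] at hs
    have hc := congrArg (starRingEnd ℂ) hs
    rw [map_sum, map_mul, conj_ofReal, ← Complex.exp_conj] at hc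
    simp_rw [← Complex.exp_conj] at hc
    convert hc using 2
    · refine congrArg cexp ?_
      simp
    · refine congrArg cexp ?_
      simp [map_ofNat]; ring

lemma phase_sum {ι : Type*} [Fintype ι] {N : ℕ} (f : ι → ℤ) :
    phase N (∑ i, f i) = ∏ i, phase N (f i) := by
  simp only [phase, ← Complex.exp_sum]
  congr 1
  push_cast
  rw [Finset.mul_sum, Finset.sum_div]

lemma sum_phase_diagonal {N : ℕ} [NeZero N] (q : ι → ℤ) :
    ∑ x : ι → ZMod N, phase N (zlift x ⬝ᵥ diagonal q *ᵥ zlift x)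
      = ∏ i, ∑ t : ZMod N, phase N (q i * (t.val : ℤ) ^ 2) := by
  rw [Finset.prod_univ_sum, Fintype.piFinset_univ]
  refine Finset.sum_congr rfl fun x _ => ?_
  rw [← phase_sum]
  congr 1
  simp only [dotProduct, mulVec_diagonal, zlift]
  exact Finset.sum_congr rfl fun i _ => by ring

end

/-- Milgram's formula for hyperbolic lattices, up to a positive factor. -/
lemma exists_sum_phase_eq_of_hyperbolic {r : ℕ} (hr : 1 ≤ r) {M : Matrix (Fin r) (Fin r) ℤ}
    (hMs : M.IsSymm) (hM : ∀ i, Even (M i i)) (hdet : M.det ≠ 0) (hH : IsHyperbolicGram M) :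
    ∃ (N : ℕ) (_ : NeZero N) (X : Matrix (Fin r) (Fin r) ℤ) (c : ℝ), X.IsSymm ∧
      M * X = (N : ℤ) • (1 : Matrix (Fin r) (Fin r) ℤ) ∧ 0 < c ∧
      ∑ x : Fin r → ZMod N, phase N (zlift x ⬝ᵥ X *ᵥ zlift x)
        = c * Complex.exp (Real.pi * Complex.I / 4 * (2 - r)) := by
  have hMe := even_dotProduct_mulVec hMs hM
  obtain ⟨P, d, hP, hPd⟩ := exists_diagonalization M hMs
  have hd0 : ∀ i, d i ≠ 0 := by
    have h1 := congrArg det hPd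
    rw [det_mul, det_mul, det_transpose, det_diagonal] at h1
    have h2 : ∏ i, d i ≠ 0 := by rw [← h1]; exact mul_ne_zero (mul_ne_zero hP hdet) hP
    exact fun i => Finset.prod_ne_zero_iff.1 h2 i (Finset.mem_univ _)
  have hde : ∀ i, Even (d i) := by
    intro i
    have h1 := hMe (P *ᵥ Pi.single i 1)
    rw [mulVec_dotProduct_mulVec, hPd] at h1
    simpa using h1
  have hcard : {i | 0 < d i}.ncard = 1 := by
    obtain ⟨Q, hQ, hQd⟩ := hH
    have hPR : IsUnit (P.map (Int.cast : ℤ → ℝ)).det := by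
      have := Int.cast_det (R := ℝ) P
      rw [← this]; exact isUnit_iff_ne_zero.2 (by exact_mod_cast hP)
    have h1 : ∀ u : Fin r → ℤ, (diagonal u).map (Int.cast : ℤ → ℝ)
        = diagonal fun i => (u i : ℝ) := by
      intro u; rw [diagonal_map (by simp)]
    set PR := P.map (Int.cast : ℤ → ℝ)
    have hPd' : PRᵀ * M.map (Int.cast : ℤ → ℝ) * PR = diagonal fun i => (d i : ℝ) := by
      rw [← h1, ← hPd, map_mul_intCast, map_mul_intCast, transpose_map]
    have h2 := ncard_pos_eq_of_congr (S := Q⁻¹ * PR)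
      (w := fun i : Fin r => if (i : ℕ) = 0 then (1 : ℝ) else -1) (d := fun i => (d i : ℝ))
      (by rw [det_mul]; exact (isUnit_nonsing_inv_det Q hQ).mul hPR) (by
        rw [← hQd, ← hPd', transpose_mul]
        have e1 : Q * Q⁻¹ = 1 := mul_nonsing_inv Q hQ
        have e2 : (Q⁻¹)ᵀ * Qᵀ = 1 := by rw [← transpose_mul, e1, transpose_one]
        calc _ = PRᵀ * ((Q⁻¹)ᵀ * Qᵀ) * M.map (Int.cast : ℤ → ℝ) * (Q * Q⁻¹) * PR := by
              simp only [Matrix.mul_assoc]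
          _ = _ := by rw [e1, e2, Matrix.mul_one, Matrix.mul_one])
    have h3 : {i : Fin r | 0 < if (i : ℕ) = 0 then (1 : ℝ) else -1} = {⟨0, hr⟩} := by
      ext i
      simp only [Set.mem_ofPred_eq, Set.mem_singleton_iff, Fin.ext_iff]
      split_ifs with h <;> simp [h]
    rw [h3, Set.ncard_singleton] at h2
    simpa using h2
  let N : ℕ := ∏ i, (d i).natAbs
  have hN : NeZero N := ⟨Finset.prod_ne_zero_iff.2 fun i _ => Int.natAbs_ne_zero.2 (hd0 i)⟩
  have hq : ∀ i, ∃ q : ℤ, d i * q = N := fun i => by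
    obtain ⟨k, hk⟩ := Int.natAbs_dvd.1 (Int.natCast_dvd_natCast.2
      (Finset.dvd_prod_of_mem (fun i => (d i).natAbs) (Finset.mem_univ i)))
    exact ⟨k, hk.symm⟩
  choose q hq using hq
  have hDq : (Pᵀ * M * P) * diagonal q = (N : ℤ) • (1 : Matrix (Fin r) (Fin r) ℤ) := by
    rw [hPd, diagonal_mul_diagonal, ← diagonal_one, ← diagonal_smul]
    congr 1
    ext i
    simp [hq]
  have hMX : M * (P * diagonal q * Pᵀ) = (N : ℤ) • (1 : Matrix (Fin r) (Fin r) ℤ) := by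
    refine mul_cancel_of_det_ne_zero (A := Pᵀ) (by rwa [det_transpose]) ?_
    calc _ = (Pᵀ * M * P) * diagonal q * Pᵀ := by simp only [Matrix.mul_assoc]
      _ = _ := by rw [hDq, Matrix.mul_smul, Matrix.smul_mul, Matrix.one_mul, Matrix.mul_one]
  obtain ⟨k, hk, hsum⟩ := exists_sum_phase_sublattice hMe hMs (isSymm_diagonal q) hP hDq
  choose c hc hcs using fun i => sum_phase_mul_sq (hde i) (hq i)
  refine ⟨N, hN, P * diagonal q * Pᵀ, k * ∏ i, c i, ?_, hMX, ?_, ?_⟩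
  · simp [Matrix.IsSymm, transpose_mul, Matrix.mul_assoc]
  · exact mul_pos (by exact_mod_cast hk) (Finset.prod_pos fun i _ => hc i)
  rw [hsum, sum_phase_diagonal, Finset.prod_congr rfl fun i _ => hcs i, Finset.prod_mul_distrib,
    ← Complex.exp_sum, ← Finset.mul_sum]
  have hsgn : ∑ i, (if 0 < d i then (1 : ℂ) else -1) = 2 - r := by
    have h4 : ∀ i, (if 0 < d i then (1 : ℂ) else -1) = 2 * (if 0 < d i then 1 else 0) - 1 := by
      intro i; split_ifs <;> norm_num
    rw [Finset.sum_congr rfl fun i _ => h4 i, Finset.sum_sub_distrib, ← Finset.mul_sum,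
      Finset.sum_boole]
    rw [Set.ncard_eq_toFinset_card'] at hcard
    have h5 : (Finset.univ.filter fun i => 0 < d i) = {i | 0 < d i}.toFinset := by ext; simp
    rw [h5, hcard]
    simp
  rw [hsgn]
  push_cast
  ring

open Complex in
/-- The sector of a positive multiple of `e^{π i (2 - r) / 4}`. -/
lemma sector_of_eq_mul_exp {S : ℂ} {c : ℝ} {r : ℕ} (hc : 0 < c)
    (hS : S = c * cexp (Real.pi * I / 4 * (2 - r))) :
    (r % 8 = 0 → S.re = 0 ∧ 0 < S.im) ∧ (r % 8 = 1 → 0 < S.re ∧ S.im = S.re) ∧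
    (r % 8 = 2 → 0 < S.re ∧ S.im = 0) ∧ (r % 8 = 3 → 0 < S.re ∧ S.im = -S.re) ∧
    (r % 8 = 4 → S.re = 0 ∧ S.im < 0) ∧ (r % 8 = 5 → S.re < 0 ∧ S.im = S.re) ∧
    (r % 8 = 6 → S.re < 0 ∧ S.im = 0) ∧ (r % 8 = 7 → S.re < 0 ∧ S.im = -S.re) := by
  set η : ℂ := cexp (-(Real.pi * I / 4)) with hη
  set t : ℝ := √2 / 2 with ht
  have ht0 : 0 < t := by positivity
  have htt : t * t = 1 / 2 := by
    rw [ht, div_mul_div_comm, Real.mul_self_sqrt (by norm_num)]; norm_num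
  have h1 : η = t - t * I := by
    rw [hη, show -(Real.pi * I / 4 : ℂ) = ((-(Real.pi / 4) : ℝ) : ℂ) * I by push_cast; ring,
      Complex.exp_mul_I, ← Complex.ofReal_cos, ← Complex.ofReal_sin, Real.cos_neg, Real.sin_neg,
      Real.cos_pi_div_four, Real.sin_pi_div_four, ← ht]
    push_cast; ring
  have httc : (t : ℂ) * t = 1 / 2 := by
    rw [← Complex.ofReal_mul, htt]; push_cast; rfl
  have h2 : η ^ 2 = -I := by
    rw [h1]; linear_combination (-2 * I) * httc + t ^ 2 * Complex.I_sq
  have h8 : η ^ 8 = 1 := by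
    rw [show η ^ 8 = (η ^ 2) ^ 4 by ring, h2]
    linear_combination (I ^ 2 - 1) * Complex.I_sq
  have hexp : cexp (Real.pi * I / 4 * (2 - r)) = I * η ^ (r % 8) := by
    have h3 : η ^ r = η ^ (r % 8) := by
      conv_lhs => rw [← Nat.div_add_mod r 8, pow_add, pow_mul, h8, one_pow, one_mul]
    rw [← h3, hη, ← Complex.exp_nat_mul, mul_sub, sub_eq_add_neg, Complex.exp_add,
      show (Real.pi * I / 4 * 2 : ℂ) = Real.pi / 2 * I by ring, Complex.exp_pi_div_two_mul_I]
    congr 2; ring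
  have hct : 0 < c * t := mul_pos hc ht0
  rw [hexp] at hS
  have e3 : η ^ 3 = -I * η := by rw [pow_succ, h2]
  have e4 : η ^ 4 = -1 := by
    rw [show η ^ 4 = (η ^ 2) ^ 2 by ring, h2]; simp
  have e5 : η ^ 5 = -η := by rw [pow_succ, e4]; ring
  have e6 : η ^ 6 = I := by rw [show η ^ 6 = η ^ 4 * η ^ 2 by ring, h2, e4]; ring
  have e7 : η ^ 7 = I * η := by rw [pow_succ, e6]
  have key : ∀ x y : ℝ, I * η ^ (r % 8) = x + y * I → S.re = c * x ∧ S.im = c * y := by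
    intro x y h
    rw [hS, h]; simp
  refine ⟨?_, ?_, ?_, ?_, ?_, ?_, ?_, ?_⟩ <;> intro h <;> rw [h] at key
  · obtain ⟨h3, h4⟩ := key 0 1 (by simp)
    rw [h3, h4]; constructor <;> linarith
  · obtain ⟨h3, h4⟩ := key t t (by rw [pow_one, h1]; linear_combination -t * Complex.I_sq)
    rw [h3, h4]; constructor <;> linarith
  · obtain ⟨h3, h4⟩ := key 1 0 (by simp [h2])
    rw [h3, h4]; constructor <;> linarith
  · obtain ⟨h3, h4⟩ := key t (-t) (by
      rw [e3, h1]; push_cast; linear_combination (-t + t * I) * Complex.I_sq)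
    rw [h3, h4]; constructor <;> linarith
  · obtain ⟨h3, h4⟩ := key 0 (-1) (by simp [e4])
    rw [h3, h4]; constructor <;> linarith
  · obtain ⟨h3, h4⟩ := key (-t) (-t) (by
      rw [e5, h1]; push_cast; linear_combination t * Complex.I_sq)
    rw [h3, h4]; constructor <;> linarith
  · obtain ⟨h3, h4⟩ := key (-1) 0 (by simp [e6])
    rw [h3, h4]; constructor <;> linarith
  · obtain ⟨h3, h4⟩ := key (-t) t (by
      rw [e7, h1]; push_cast; linear_combination (t - t * I) * Complex.I_sq)
    rw [h3, h4]; constructor <;> linarith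

lemma exists_phase_two_eq (n : ℤ) : ∃ u v : ℤ, phase 2 n = u + v * Complex.I ∧
    -1 ≤ u ∧ (Even n → v = 0) ∧ (u = -1 → Even n) := by
  have h4 : phase 2 n = phase 2 (n % 4) := by
    conv_lhs => rw [← Int.emod_add_mul_ediv n 4, phase_add]
    rw [(phase_eq_one_iff two_pos (4 * (n / 4))).2 ⟨n / 4, by norm_num⟩, mul_one]
  have h1 : phase 2 1 = Complex.I := by
    rw [phase, show (Real.pi * Complex.I * (1 : ℤ) / (2 : ℕ) : ℂ) = Real.pi / 2 * Complex.I by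
      push_cast; ring, Complex.exp_pi_div_two_mul_I]
  have h2 : phase 2 2 = -1 := by
    rw [show (2 : ℤ) = 1 + 1 by rfl, phase_add, h1, Complex.I_mul_I]
  have h3 : phase 2 3 = -Complex.I := by
    rw [show (3 : ℤ) = 2 + 1 by rfl, phase_add, h1, h2]; ring
  have hr : n % 4 = 0 ∨ n % 4 = 1 ∨ n % 4 = 2 ∨ n % 4 = 3 := by omega
  rw [h4]
  rcases hr with h | h | h | h <;> rw [h]
  · exact ⟨1, 0, by simp [phase_zero], by omega, by simp, by omega⟩
  · exact ⟨0, 1, by simp [h1], by omega, by rw [Int.even_iff]; omega, by omega⟩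
  · exact ⟨-1, 0, by simp [h2], by omega, by simp, by rw [Int.even_iff]; omega⟩
  · exact ⟨0, -1, by simp [h3], by omega, by rw [Int.even_iff]; omega, by omega⟩

lemma conj_phase (N : ℕ) (n : ℤ) : (starRingEnd ℂ) (phase N n) = phase N (-n) := by
  rw [phase, phase, ← Complex.exp_conj]
  congr 1
  simp

/-- The parity of the exponent of a norm `2 ^ a` of a Gaussian integer on a coordinate axis or on a
diagonal. -/
lemma even_of_sq_eq_two_pow {w : ℤ} {a : ℕ} (h : w ^ 2 = 2 ^ a) : Even a := by
  have := congrArg (padicValInt 2) h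
  rw [sq, padicValInt.mul (by rintro rfl; simp at h; exact pow_ne_zero a two_ne_zero h.symm)
    (by rintro rfl; simp at h; exact pow_ne_zero a two_ne_zero h.symm)] at this
  have h2 : padicValInt 2 ((2 : ℤ) ^ a) = a := by
    rw [padicValInt, Int.natAbs_pow]; simp
  rw [h2] at this
  exact ⟨_, this.symm⟩

lemma exists_mul_eq_smul_one {ι : Type*} [Fintype ι] [DecidableEq ι] {M : Matrix ι ι ℤ} {c : ℤ}
    (h : ∀ y, ∃ z, M *ᵥ z = c • y) : ∃ X : Matrix ι ι ℤ, M * X = c • (1 : Matrix ι ι ℤ) := by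
  choose z hz using h
  refine ⟨Matrix.of fun i j => z (Pi.single j 1) i, ?_⟩
  ext i j
  have := congrFun (hz (Pi.single j 1)) i
  simp only [mulVec, dotProduct] at this
  simp [Matrix.mul_apply, this, Matrix.one_apply, Pi.single_apply]

lemma isSymm_of_mul_eq_smul_one {ι : Type*} [Fintype ι] [DecidableEq ι] {M X : Matrix ι ι ℤ}
    {c : ℤ} (hc : c ≠ 0) (hM : M.IsSymm) (hdet : M.det ≠ 0)
    (h : M * X = c • (1 : Matrix ι ι ℤ)) : X.IsSymm := by
  refine mul_cancel_of_det_ne_zero hdet ?_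
  have h1 := congrArg transpose (mul_eq_smul_one_comm hc h)
  rw [transpose_mul, hM.eq] at h1
  rw [h1, h]; simp

section
variable {r a : ℕ}

lemma exists_zmod_hom {N : ℕ} [NeZero N] (φ : (Fin r → ℤ) →+ (Fin a → ZMod 2))
    (hN : ∀ y, φ ((N : ℤ) • y) = 0) (hφ : Function.Surjective φ) :
    ∃ ψ : (Fin r → ZMod N) →+ (Fin a → ZMod 2), Function.Surjective ψ ∧
      ∀ x, ψ x = φ (zlift x) := by
  have hper : ModPeriodic N φ := fun y k => by rw [map_add, hN, add_zero]
  refine ⟨AddMonoidHom.mk' (fun x => φ (zlift x)) fun x y => ?_, fun v => ?_, fun x => rfl⟩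
  · rw [← map_add]
    exact hper.zlift_eq _ _ fun i => by simp [intCast_zlift]
  · obtain ⟨y, rfl⟩ := hφ v
    exact ⟨fun i => ((y i : ℤ) : ZMod N), hper.zlift_eq _ _ fun i => rfl⟩

variable {M X : Matrix (Fin r) (Fin r) ℤ} {φ : (Fin r → ℤ) →+ (Fin a → ZMod 2)}

lemma phase_two_eq_of_map_eq (hX : X.IsSymm) (hM : ∀ y, Even (y ⬝ᵥ M *ᵥ y))
    (hXM : X * M = (2 : ℤ) • (1 : Matrix (Fin r) (Fin r) ℤ))
    (hker : ∀ y, φ y = 0 ↔ ∃ z, M *ᵥ z = y) {y z : Fin r → ℤ} (h : φ y = φ z) :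
    phase 2 (y ⬝ᵥ X *ᵥ y) = phase 2 (z ⬝ᵥ X *ᵥ z) := by
  obtain ⟨t, ht⟩ := (hker (y - z)).1 (by rw [map_sub, h, sub_self])
  have : y = z + M *ᵥ t := by rw [ht]; abel
  rw [this]
  exact phase_add_mulVec two_pos hX hM (by exact_mod_cast hXM) z t

/-- The bilinear character of the discriminant group is nondegenerate. -/
lemma sum_phase_four_eq (hMs : M.IsSymm)
    (hMX : M * X = (2 : ℤ) • (1 : Matrix (Fin r) (Fin r) ℤ))
    (hker : ∀ y, φ y = 0 ↔ ∃ z, M *ᵥ z = y)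
    {s : (Fin a → ZMod 2) → Fin r → ℤ} (hs : ∀ v, φ (s v) = v) (w : Fin a → ZMod 2) :
    ∑ v, phase 2 (2 * (s v ⬝ᵥ X *ᵥ s w)) = if w = 0 then (2 : ℂ) ^ a else 0 := by
  have hXM := mul_eq_smul_one_comm two_ne_zero hMX
  have hwd : ∀ y z : Fin r → ℤ, φ y = φ z →
      phase 2 (2 * (y ⬝ᵥ X *ᵥ s w)) = phase 2 (2 * (z ⬝ᵥ X *ᵥ s w)) := by
    intro y z h
    obtain ⟨t, ht⟩ := (hker (y - z)).1 (by rw [map_sub, h, sub_self])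
    have : y = z + M *ᵥ t := by rw [ht]; abel
    have h2 : (M *ᵥ t) ⬝ᵥ X *ᵥ s w = 2 * (t ⬝ᵥ s w) := by
      have := mulVec_dotProduct_mulVec M X 1 t (s w)
      rw [one_mulVec, hMs.eq, Matrix.mul_one, hMX, smul_mulVec, one_mulVec, dotProduct_smul] at this
      simpa using this
    rw [this, add_dotProduct, h2, mul_add, phase_add,
      (phase_eq_one_iff two_pos (2 * (2 * _))).2 ⟨t ⬝ᵥ s w, by push_cast; ring⟩, mul_one]
  split_ifs with hw
  · have h0 : ∀ v, phase 2 (2 * (s v ⬝ᵥ X *ᵥ s w)) = 1 := by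
      intro v
      obtain ⟨t, ht⟩ := (hker (s w)).1 (by rw [hs, hw])
      rw [← ht, mulVec_mulVec, hXM, smul_mulVec, one_mulVec, dotProduct_smul,
        phase_eq_one_iff two_pos]
      exact ⟨s v ⬝ᵥ t, by push_cast; rw [smul_eq_mul]; ring⟩
    simp [h0, ZMod.card]
  · obtain ⟨y, hy⟩ : ∃ y, phase 2 (2 * (y ⬝ᵥ X *ᵥ s w)) ≠ 1 := by
      by_contra! hcon
      have h1 : ∀ i, ∃ k, (X *ᵥ s w) i = 2 * k := by
        intro i
        have := hcon (Pi.single i 1)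
        rw [phase_eq_one_iff two_pos, single_one_dotProduct] at this
        obtain ⟨k, hk⟩ := this
        exact ⟨k, by push_cast at hk; linarith⟩
      choose k hk using h1
      refine hw ?_
      rw [← hs w, hker]
      refine ⟨k, smul_right_injective _ (two_ne_zero (α := ℤ)) ?_⟩
      have h2 : X *ᵥ s w = (2 : ℤ) • k := funext fun i => by simp [hk]
      have h3 := congrArg (M *ᵥ ·) h2
      simp only [mulVec_mulVec, hMX, mulVec_smul, smul_mulVec, one_mulVec] at h3
      exact h3.symm
    have h1 : ∑ v, phase 2 (2 * (s v ⬝ᵥ X *ᵥ s w))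
        = (∑ v, phase 2 (2 * (s v ⬝ᵥ X *ᵥ s w))) * phase 2 (2 * (y ⬝ᵥ X *ᵥ s w)) := by
      conv_lhs => rw [← _root_.Equiv.sum_comp (Equiv.addRight (φ y))]
      rw [Finset.sum_mul]
      refine Finset.sum_congr rfl fun v _ => ?_
      rw [← phase_add, ← mul_add, ← add_dotProduct]
      exact hwd _ _ (by rw [hs, map_add, hs]; rfl)
    have h0 : (∑ v, phase 2 (2 * (s v ⬝ᵥ X *ᵥ s w))) * (phase 2 (2 * (y ⬝ᵥ X *ᵥ s w)) - 1) = 0 := by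
      rw [mul_sub, ← h1, mul_one, sub_self]
    exact (mul_eq_zero.1 h0).resolve_right (sub_ne_zero.2 hy)

/-- The Gauss sum of the discriminant form has absolute value `2 ^ (a / 2)`. -/
lemma normSq_sum_phase_two (hMs : M.IsSymm) (hM : ∀ y, Even (y ⬝ᵥ M *ᵥ y))
    (hX : X.IsSymm) (hMX : M * X = (2 : ℤ) • (1 : Matrix (Fin r) (Fin r) ℤ))
    (hker : ∀ y, φ y = 0 ↔ ∃ z, M *ᵥ z = y)
    {s : (Fin a → ZMod 2) → Fin r → ℤ} (hs : ∀ v, φ (s v) = v) :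
    Complex.normSq (∑ v, phase 2 (s v ⬝ᵥ X *ᵥ s v)) = 2 ^ a := by
  have hXM := mul_eq_smul_one_comm two_ne_zero hMX
  rw [← Complex.ofReal_inj, Complex.normSq_eq_conj_mul_self, map_sum, Finset.sum_mul]
  have h1 : ∀ v, (starRingEnd ℂ) (phase 2 (s v ⬝ᵥ X *ᵥ s v)) * ∑ u, phase 2 (s u ⬝ᵥ X *ᵥ s u)
      = ∑ w, phase 2 (s w ⬝ᵥ X *ᵥ s w) * phase 2 (2 * (s v ⬝ᵥ X *ᵥ s w)) := by
    intro v
    rw [← _root_.Equiv.sum_comp (Equiv.addLeft v), Finset.mul_sum]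
    refine Finset.sum_congr rfl fun w _ => ?_
    have h2 : φ (s (Equiv.addLeft v w)) = φ (s v + s w) := by rw [hs, map_add, hs, hs]; rfl
    rw [phase_two_eq_of_map_eq hX hM hXM hker h2, conj_phase, dotProduct_mulVec_add hX,
      ← phase_add, ← phase_add]
    congr 1; ring
  rw [Finset.sum_congr rfl fun v _ => h1 v, Finset.sum_comm]
  simp_rw [← Finset.mul_sum, sum_phase_four_eq hMs hMX hker hs]
  simp only [mul_ite, mul_zero, Finset.sum_ite_eq', Finset.mem_univ, if_true]
  have h0 : phase 2 (s 0 ⬝ᵥ X *ᵥ s 0) = 1 := by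
    rw [phase_two_eq_of_map_eq (z := 0) hX hM hXM hker (by rw [hs, map_zero])]
    simp [phase_zero]
  rw [h0]; simp

/-- Milgram's formula for `2`-elementary hyperbolic lattices. -/
lemma exists_sum_phase_two_eq (hr : 1 ≤ r) (hMs : M.IsSymm) (hMd : ∀ i, Even (M i i))
    (hdet : M.det ≠ 0) (hH : IsHyperbolicGram M) (hX : X.IsSymm)
    (hMX : M * X = (2 : ℤ) • (1 : Matrix (Fin r) (Fin r) ℤ))
    (hker : ∀ y, φ y = 0 ↔ ∃ z, M *ᵥ z = y)
    {s : (Fin a → ZMod 2) → Fin r → ℤ} (hs : ∀ v, φ (s v) = v) :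
    ∃ c : ℝ, 0 < c ∧ ∑ v, phase 2 (s v ⬝ᵥ X *ᵥ s v)
      = c * Complex.exp (Real.pi * Complex.I / 4 * (2 - r)) := by
  have hM := even_dotProduct_mulVec hMs hMd
  have hXM := mul_eq_smul_one_comm two_ne_zero hMX
  obtain ⟨N, hN, Y, c, -, hMY, hc, hsum⟩ := exists_sum_phase_eq_of_hyperbolic hr hMs hMd hdet hH
  have hYX : (N : ℤ) • X = (2 : ℤ) • Y := by
    refine mul_cancel_of_det_ne_zero hdet ?_
    rw [Matrix.mul_smul, Matrix.mul_smul, hMX, hMY, smul_comm]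
  have hφs : Function.Surjective φ := fun v => ⟨s v, hs v⟩
  obtain ⟨ψ, hψ, hψφ⟩ := exists_zmod_hom (N := N) φ (fun y => (hker _).2
    ⟨Y *ᵥ y, by rw [mulVec_mulVec, hMY, smul_mulVec, one_mulVec]⟩) hφs
  obtain ⟨k, hk, hksum⟩ := exists_sum_comp_hom ψ fun v => phase 2 (s v ⬝ᵥ X *ᵥ s v)
  have hterm : ∀ x : Fin r → ZMod N, phase 2 (s (ψ x) ⬝ᵥ X *ᵥ s (ψ x))
      = phase N (zlift x ⬝ᵥ Y *ᵥ zlift x) := by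
    intro x
    rw [phase_two_eq_of_map_eq (z := zlift x) hX hM hXM hker (by rw [hs, hψφ])]
    have h1 : (N : ℤ) * (zlift x ⬝ᵥ X *ᵥ zlift x) = 2 * (zlift x ⬝ᵥ Y *ᵥ zlift x) := by
      have := congrArg (fun A => zlift x ⬝ᵥ A *ᵥ zlift x) hYX
      simpa only [smul_mulVec, dotProduct_smul, smul_eq_mul] using this
    have h2 : (N : ℂ) * (zlift x ⬝ᵥ X *ᵥ zlift x : ℤ) = 2 * (zlift x ⬝ᵥ Y *ᵥ zlift x : ℤ) := by
      exact_mod_cast h1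
    have hNc : (N : ℂ) ≠ 0 := by exact_mod_cast NeZero.ne N
    rw [phase, phase]
    congr 1
    rw [div_eq_div_iff (by norm_num) hNc]
    push_cast
    linear_combination (Real.pi * Complex.I) * h2
  rw [Finset.sum_congr rfl fun x _ => hterm x, hsum] at hksum
  have hrange : (Finset.univ.filter (· ∈ ψ.range)) = Finset.univ := by
    ext v; simpa using hψ v
  rw [hrange] at hksum
  have hkc : (k : ℂ) ≠ 0 := by exact_mod_cast hk.ne'
  refine ⟨c / k, div_pos hc (by exact_mod_cast hk), ?_⟩
  refine mul_left_cancel₀ hkc (hksum.symm.trans ?_)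
  push_cast
  field_simp

end

section
variable {r : ℕ}

lemma isHyperbolicGram_of_two_smul {M : Matrix (Fin r) (Fin r) ℤ}
    (hH : IsHyperbolicGram ((2 : ℤ) • M)) : IsHyperbolicGram M := by
  obtain ⟨P, hP, h⟩ := hH
  refine ⟨(√2 : ℝ) • P, ?_, ?_⟩
  · rw [det_smul]
    exact (isUnit_iff_ne_zero.2 (pow_ne_zero _ (by positivity))).mul hP
  · rw [← h, transpose_smul, Matrix.mul_smul, Matrix.smul_mul, Matrix.smul_mul, smul_smul,
      Real.mul_self_sqrt (by norm_num)]
    have : ((2 : ℤ) • M).map (Int.cast : ℤ → ℝ) = (2 : ℝ) • M.map (Int.cast : ℤ → ℝ) := by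
      ext i j
      simp only [map_apply, Matrix.smul_apply, smul_eq_mul, Int.cast_mul, Int.cast_ofNat]
    rw [this, Matrix.mul_smul, Matrix.smul_mul]

/-- An even unimodular hyperbolic lattice has rank `2` modulo `8`. -/
lemma mod_eight_of_unimodular (hr : 1 ≤ r) {M Y : Matrix (Fin r) (Fin r) ℤ}
    (hMs : M.IsSymm) (hMd : ∀ i, Even (M i i)) (hdet : M.det ≠ 0) (hH : IsHyperbolicGram M)
    (hMY : M * Y = 1) : r % 8 = 2 := by
  obtain ⟨N, hN, X, c, -, hMX, hc, hsum⟩ := exists_sum_phase_eq_of_hyperbolic hr hMs hMd hdet hH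
  have hXY : X = (N : ℤ) • Y := mul_cancel_of_det_ne_zero hdet (by rw [hMX, Matrix.mul_smul, hMY])
  have h1 : ∀ x : Fin r → ZMod N, phase N (zlift x ⬝ᵥ X *ᵥ zlift x) = 1 := by
    intro x
    obtain ⟨k, hk⟩ := even_dotProduct_mulVec hMs hMd (Y *ᵥ zlift x)
    rw [mulVec_mulVec, hMY, one_mulVec, dotProduct_comm] at hk
    rw [hXY, smul_mulVec, dotProduct_smul, hk, phase_eq_one_iff (NeZero.pos N)]
    exact ⟨k, by rw [smul_eq_mul]; ring⟩
  have hpos : (0 : ℝ) < N ^ r := pow_pos (by exact_mod_cast NeZero.pos N) _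
  have h2 : ((N ^ r : ℝ) : ℂ) = c * Complex.exp (Real.pi * Complex.I / 4 * (2 - r)) := by
    rw [← hsum, Finset.sum_congr rfl fun x _ => h1 x]
    simp [ZMod.card]
  obtain ⟨g0, g1, -, g3, g4, g5, g6, g7⟩ := sector_of_eq_mul_exp hc h2
  simp only [Complex.ofReal_re, Complex.ofReal_im] at g0 g1 g3 g4 g5 g6 g7
  by_contra h
  have hcase : r % 8 = 0 ∨ r % 8 = 1 ∨ r % 8 = 3 ∨ r % 8 = 4 ∨ r % 8 = 5 ∨
      r % 8 = 6 ∨ r % 8 = 7 := by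
    omega
  rcases hcase with h | h | h | h | h | h | h
  · linarith [g0 h]
  · linarith [g1 h]
  · linarith [g3 h]
  · linarith [g4 h]
  · linarith [g5 h]
  · linarith [g6 h]
  · linarith [g7 h]

lemma deltaZero_iff {M X : Matrix (Fin r) (Fin r) ℤ}
    (hMX : M * X = (2 : ℤ) • (1 : Matrix (Fin r) (Fin r) ℤ)) :
    DeltaZero M ↔ ∀ y, Even (y ⬝ᵥ X *ᵥ y) := by
  have hinv : (M.map (Int.cast : ℤ → ℚ))⁻¹ = (2 : ℚ)⁻¹ • X.map (Int.cast : ℤ → ℚ) := by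
    refine inv_eq_right_inv ?_
    rw [Matrix.mul_smul, ← map_mul_intCast, hMX]
    ext i j
    simp only [map_apply, Matrix.smul_apply, smul_eq_mul, Int.cast_mul, Int.cast_ofNat]
    by_cases h : i = j <;> simp [h, Matrix.one_apply]
  refine forall_congr' fun y => ?_
  have h1 : (fun i => (y i : ℚ)) ⬝ᵥ ((M.map (Int.cast : ℤ → ℚ))⁻¹ *ᵥ fun i => (y i : ℚ))
      = (2 : ℚ)⁻¹ * ((y ⬝ᵥ X *ᵥ y : ℤ) : ℚ) := by
    rw [hinv, smul_mulVec, dotProduct_smul, smul_eq_mul]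
    simp [dotProduct, mulVec]
  rw [h1]
  refine exists_congr fun n => ?_
  constructor
  · intro h
    have : ((y ⬝ᵥ X *ᵥ y : ℤ) : ℚ) = ((n + n : ℤ) : ℚ) := by push_cast; linarith
    exact_mod_cast this
  · intro h
    rw [h]; push_cast; ring

lemma necessity {a : ℕ} (hr : 2 ≤ r) {M : Matrix (Fin r) (Fin r) ℤ} (hMs : M.IsSymm)
    (hMd : ∀ i, Even (M i i)) (hdet : M.det ≠ 0) (hH : IsHyperbolicGram M)
    (hE : ElemOfLength 2 a M) :
    a ≤ r ∧ r % 2 = a % 2 ∧ (DeltaZero M → r % 4 = 2) ∧ (a = 0 → DeltaZero M) ∧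
      (a ≤ 1 → (r % 8 = (2 + a) % 8 ∨ r % 8 = (2 - a) % 8)) ∧
      ((a = 2 ∧ r % 8 = 6) → DeltaZero M) ∧ ((DeltaZero M ∧ a = r) → r % 8 = 2) := by
  have hM := even_dotProduct_mulVec hMs hMd
  obtain ⟨e⟩ := hE
  let φ : (Fin r → ℤ) →+ (Fin a → ZMod 2) :=
    (e.toLinearMap ∘ₗ (LinearMap.range M.mulVecLin).mkQ).toAddMonoidHom
  have hφs : Function.Surjective φ :=
    e.surjective.comp (Submodule.mkQ_surjective _)
  have hker : ∀ y, φ y = 0 ↔ ∃ z, M *ᵥ z = y := by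
    intro y
    simp [φ, Submodule.Quotient.mk_eq_zero]
  have hφ2 : ∀ y, φ ((2 : ℕ) • y) = 0 := by
    intro y; rw [map_nsmul]; ext i; simp [CharTwo.two_eq_zero]
  have hφ2' : ∀ y, φ (((2 : ℕ) : ℤ) • y) = 0 := fun y => by
    rw [← hφ2 y, ← natCast_zsmul]
  obtain ⟨X, hMX⟩ : ∃ X : Matrix (Fin r) (Fin r) ℤ, M * X = (2 : ℤ) • 1 :=
    exists_mul_eq_smul_one fun y => (hker _).1 (hφ2' y)
  have hXM := mul_eq_smul_one_comm two_ne_zero hMX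
  have hX := isSymm_of_mul_eq_smul_one two_ne_zero hMs hdet hMX
  obtain ⟨ψ, hψ, hψφ⟩ := exists_zmod_hom (N := 2) φ hφ2' hφs
  have har : a ≤ r := by
    have := Fintype.card_le_of_surjective ψ hψ
    simp only [Fintype.card_pi, ZMod.card, Finset.prod_const, Finset.card_univ,
      Fintype.card_fin] at this
    exact (Nat.pow_le_pow_iff_right (by norm_num)).1 this
  obtain ⟨s, hs⟩ := hφs.hasRightInverse
  obtain ⟨c, hc, hsum⟩ := exists_sum_phase_two_eq (by omega) hMs hMd hdet hH hX hMX hker hs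
  have hnorm := normSq_sum_phase_two hMs hM hX hMX hker hs
  have hsec := sector_of_eq_mul_exp hc hsum
  choose u v huv hu1 hv hu using fun w => exists_phase_two_eq (s w ⬝ᵥ X *ᵥ s w)
  have hS : ∑ w, phase 2 (s w ⬝ᵥ X *ᵥ s w)
      = ((∑ w, u w : ℤ) : ℂ) + ((∑ w, v w : ℤ) : ℂ) * Complex.I := by
    push_cast
    rw [Finset.sum_mul, ← Finset.sum_add_distrib]
    exact Finset.sum_congr rfl fun w _ => huv w
  set U := ∑ w, u w with hU
  set V := ∑ w, v w with hV
  rw [hS] at hnorm hsec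
  have hre : (((U : ℤ) : ℂ) + ((V : ℤ) : ℂ) * Complex.I).re = U := by simp
  have him : (((U : ℤ) : ℂ) + ((V : ℤ) : ℂ) * Complex.I).im = V := by simp
  rw [Complex.normSq_apply, hre, him] at hnorm
  rw [hre, him] at hsec
  norm_cast at hnorm hsec
  push_cast at hnorm
  have hphase0 : phase 2 (s 0 ⬝ᵥ X *ᵥ s 0) = 1 := by
    rw [phase_two_eq_of_map_eq (z := 0) hX hM hXM hker (by rw [hs, map_zero])]
    simp [phase_zero]
  have hu0 : u 0 = 1 := by
    have := congrArg Complex.re ((huv 0).symm.trans hphase0)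
    simp at this
    exact_mod_cast this
  have hδ : DeltaZero M ↔ ∀ w, Even (s w ⬝ᵥ X *ᵥ s w) := by
    rw [deltaZero_iff hMX]
    refine ⟨fun h w => h _, fun h y => ?_⟩
    obtain ⟨t, ht⟩ := (hker (y - s (φ y))).1 (by rw [map_sub, hs, sub_self])
    have : y = s (φ y) + M *ᵥ t := by rw [ht]; abel
    rw [this, dotProduct_mulVec_add hX, mulVec_mulVec, hXM, smul_mulVec, one_mulVec,
      dotProduct_smul]
    exact ((h _).add (by simp)).add (by simp)
  have heven0 : Even (s 0 ⬝ᵥ X *ᵥ s 0) := by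
    obtain ⟨k, hk⟩ := (phase_eq_one_iff two_pos _).1 hphase0
    exact ⟨2 * k, by rw [hk]; push_cast; ring⟩
  set T := ∑ w ∈ Finset.univ.erase 0, (u w + 1) with hT
  have hT0 : 0 ≤ T := Finset.sum_nonneg fun w _ => by linarith [hu1 w]
  have hUT : U = T + 2 - 2 ^ a := by
    have h1 := Finset.sum_erase_add Finset.univ (fun w => u w + 1)
      (Finset.mem_univ (0 : Fin a → ZMod 2))
    have h2 : ∑ w, (u w + 1) = U + 2 ^ a := by
      rw [Finset.sum_add_distrib]; simp [ZMod.card, hU]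
    rw [h2, hu0] at h1
    linarith
  clear_value U V T
  have hpar : r % 2 = a % 2 := by
    clear hV hU hT hUT
    rcases Nat.even_or_odd a with ha | ha
    · by_contra h
      have := Nat.even_iff.1 ha
      have hVU : V = U ∨ V = -U := by omega
      have h1 : 2 * U ^ 2 = 2 ^ a := by
        rcases hVU with h | h <;> rw [h] at hnorm <;> linear_combination hnorm
      have h2 : (2 * U) ^ 2 = 2 ^ (a + 1) := by rw [pow_succ (2 : ℤ) a, ← h1]; ring
      have := even_of_sq_eq_two_pow h2
      grind
    · by_contra h
      have hVU : V = 0 ∨ U = 0 := by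
        have := Nat.odd_iff.1 ha
        omega
      have h2 : (U + V) ^ 2 = 2 ^ a := by
        rcases hVU with h | h <;> rw [h] at hnorm ⊢ <;> linear_combination hnorm
      have := even_of_sq_eq_two_pow h2
      grind
  refine ⟨har, hpar, fun h => ?_, ?_, fun ha => ?_, ?_, ?_⟩
  · have hV0 : V = 0 := hV.trans <| Finset.sum_eq_zero fun w _ => hv w (hδ.1 h w)
    have : U ≠ 0 := by
      intro hU0
      rw [hU0, hV0] at hnorm
      exact pow_ne_zero a (two_ne_zero (α := ℤ)) (by linarith)
    omega
  · intro ha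
    have : IsEmpty (Fin a) := by rw [ha]; infer_instance
    exact hδ.2 fun w => by rwa [Subsingleton.elim w 0]
  · interval_cases a
    · have hT00 : T = 0 := hT.trans <| Finset.sum_eq_zero fun w hw =>
        absurd (Subsingleton.elim w 0) (Finset.ne_of_mem_erase hw)
      have hU1 : U = 1 := by rw [hUT, hT00]; norm_num
      have hV0 : V = 0 := by
        rw [hU1] at hnorm
        have : V * V = 0 := by linarith
        simpa using this
      omega
    · omega
  · rintro ⟨rfl, h6⟩
    have h1 := hsec.2.2.2.2.2.2.1 h6
    have hU2 : U = -2 := by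
      rw [h1.2] at hnorm
      nlinarith
    have hT00 : T = 0 := by linarith
    rw [hT, Finset.sum_eq_zero_iff_of_nonneg fun w _ => by linarith [hu1 w]] at hT00
    refine hδ.2 fun w => ?_
    by_cases hw : w = 0
    · rwa [hw]
    · exact hu w (by linarith [hT00 w (Finset.mem_erase.2 ⟨hw, Finset.mem_univ _⟩)])
  · rintro ⟨hD, rfl⟩
    have hψi : Function.Injective ψ :=
      ((Fintype.bijective_iff_surjective_and_card ψ).2 ⟨hψ, rfl⟩).1
    have hMeven : ∀ i j, ∃ k, M i j = 2 * k := by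
      intro i j
      have h1 : φ (M *ᵥ Pi.single j 1) = 0 := (hker _).2 ⟨_, rfl⟩
      have h2 : ψ (fun i => ((M *ᵥ Pi.single j 1) i : ZMod 2)) = 0 := by
        rw [hψφ]
        obtain ⟨k, hk⟩ := exists_zlift_eq_add (N := 2)
          (fun i => ((M *ᵥ Pi.single j 1) i : ZMod 2)) (M *ᵥ Pi.single j 1) fun i => rfl
        rw [hk, map_add, h1, hφ2', add_zero]
      have h3 := congrFun (hψi (h2.trans (map_zero ψ).symm)) i
      simp only [mulVec_single_one, col_apply, Pi.zero_apply] at h3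
      obtain ⟨k, hk⟩ := (ZMod.intCast_zmod_eq_zero_iff_dvd _ 2).1 h3
      exact ⟨k, hk⟩
    choose M' hM' using hMeven
    have hMM' : M = (2 : ℤ) • Matrix.of M' := by
      ext i j; simp only [Matrix.smul_apply, of_apply, smul_eq_mul, hM']
    have hM's : (Matrix.of M').IsSymm := by
      ext i j
      have := hMs.apply i j
      rw [hM', hM'] at this
      simpa using this
    have hM'X : Matrix.of M' * X = 1 := by
      rw [hMM', Matrix.smul_mul] at hMX
      exact smul_right_injective _ (two_ne_zero (α := ℤ)) hMX
    have hM'd : (Matrix.of M').det ≠ 0 := by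
      intro h
      have := congrArg det hM'X
      rw [det_mul, h, zero_mul, det_one] at this
      exact zero_ne_one this
    refine mod_eight_of_unimodular (by omega) hM's (fun i => ?_) hM'd
      (isHyperbolicGram_of_two_smul (hMM' ▸ hH)) hM'X
    have h1 := (deltaZero_iff hMX).1 hD (Matrix.of M' *ᵥ Pi.single i 1)
    rw [mulVec_mulVec, mul_eq_one_comm.1 hM'X, one_mulVec, dotProduct_comm] at h1
    simpa using h1

end

/-- An even Gram matrix with integral matrices exhibiting its cokernel as `(ℤ/2ℤ)^κ`, its
inverse as `N / 2`, and a diagonalization over `ℚ`. -/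
structure TwoElementaryGram (ι κ : Type) [Fintype ι] [DecidableEq ι] [Fintype κ]
    [DecidableEq κ] where
  gram : Matrix ι ι ℤ
  proj : Matrix κ ι ℤ
  projQuot : Matrix κ ι ℤ
  sec : Matrix ι κ ℤ
  lift : Matrix ι ι ℤ
  dual : Matrix ι ι ℤ
  basis : Matrix ι ι ℤ
  diag : ι → ℤ
  isSymm : gram.IsSymm
  even_diag : ∀ i, Even (gram i i)
  proj_mul_gram : proj * gram = (2 : ℤ) • projQuot
  proj_mul_sec : proj * sec = 1
  gram_mul_lift : gram * lift + sec * proj = 1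
  gram_mul_dual : gram * dual = (2 : ℤ) • (1 : Matrix ι ι ℤ)
  basis_congr : basisᵀ * gram * basis = diagonal diag
  diag_ne_zero : ∀ i, diag i ≠ 0

namespace TwoElementaryGram

section
variable {ι κ ι' κ' : Type} [Fintype ι] [DecidableEq ι] [Fintype κ] [DecidableEq κ]
  [Fintype ι'] [DecidableEq ι'] [Fintype κ'] [DecidableEq κ']

/-- The number of positive entries of the diagonalization. -/
def posIndex (G : TwoElementaryGram ι κ) : ℕ := (Finset.univ.filter fun i => 0 < G.diag i).card

/-- Evenness of the discriminant form. -/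
def DualEven (G : TwoElementaryGram ι κ) : Prop := ∀ i, Even (G.dual i i)

/-- The orthogonal direct sum. -/
def directSum (G : TwoElementaryGram ι κ) (H : TwoElementaryGram ι' κ') :
    TwoElementaryGram (ι ⊕ ι') (κ ⊕ κ') where
  gram := fromBlocks G.gram 0 0 H.gram
  proj := fromBlocks G.proj 0 0 H.proj
  projQuot := fromBlocks G.projQuot 0 0 H.projQuot
  sec := fromBlocks G.sec 0 0 H.sec
  lift := fromBlocks G.lift 0 0 H.lift
  dual := fromBlocks G.dual 0 0 H.dual
  basis := fromBlocks G.basis 0 0 H.basis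
  diag := Sum.elim G.diag H.diag
  isSymm := IsSymm.fromBlocks G.isSymm (by simp) H.isSymm
  even_diag := by rintro (i | i) <;> simp [G.even_diag, H.even_diag]
  proj_mul_gram := by
    simp [fromBlocks_multiply, G.proj_mul_gram, H.proj_mul_gram, fromBlocks_smul]
  proj_mul_sec := by
    simp [fromBlocks_multiply, G.proj_mul_sec, H.proj_mul_sec]
  gram_mul_lift := by
    simp [fromBlocks_multiply, fromBlocks_add, G.gram_mul_lift, H.gram_mul_lift]
  gram_mul_dual := by
    rw [← fromBlocks_one, fromBlocks_smul]
    simp [fromBlocks_multiply, G.gram_mul_dual, H.gram_mul_dual]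
  basis_congr := by
    simp [fromBlocks_multiply, fromBlocks_transpose, G.basis_congr, H.basis_congr,
      fromBlocks_diagonal]
  diag_ne_zero := by rintro (i | i) <;> simp [G.diag_ne_zero, H.diag_ne_zero]

lemma posIndex_directSum (G : TwoElementaryGram ι κ) (H : TwoElementaryGram ι' κ') :
    (G.directSum H).posIndex = G.posIndex + H.posIndex := by
  unfold posIndex
  rw [Finset.card_filter, Fintype.sum_sum_type, ← Finset.card_filter, ← Finset.card_filter]
  rfl

lemma dualEven_directSum (G : TwoElementaryGram ι κ) (H : TwoElementaryGram ι' κ') :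
    (G.directSum H).DualEven ↔ G.DualEven ∧ H.DualEven := by
  simp [DualEven, directSum]

/-- Relabelling of the index types. -/
def reindex (G : TwoElementaryGram ι κ) (e : ι' ≃ ι) (f : κ' ≃ κ) : TwoElementaryGram ι' κ' where
  gram := G.gram.submatrix e e
  proj := G.proj.submatrix f e
  projQuot := G.projQuot.submatrix f e
  sec := G.sec.submatrix e f
  lift := G.lift.submatrix e e
  dual := G.dual.submatrix e e
  basis := G.basis.submatrix e e
  diag := G.diag ∘ e
  isSymm := G.isSymm.submatrix e
  even_diag i := G.even_diag (e i)
  proj_mul_gram := by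
    rw [submatrix_mul_equiv, G.proj_mul_gram]; rfl
  proj_mul_sec := by
    rw [submatrix_mul_equiv, G.proj_mul_sec, submatrix_one_equiv]
  gram_mul_lift := by
    rw [submatrix_mul_equiv, submatrix_mul_equiv]
    exact (congrArg (fun A => A.submatrix e e) G.gram_mul_lift).trans (submatrix_one_equiv e)
  gram_mul_dual := by
    rw [submatrix_mul_equiv, G.gram_mul_dual, submatrix_smul, Pi.smul_apply, Pi.smul_apply,
      submatrix_one_equiv]
  basis_congr := by
    rw [transpose_submatrix, submatrix_mul_equiv, submatrix_mul_equiv, G.basis_congr,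
      submatrix_diagonal_equiv]
  diag_ne_zero i := G.diag_ne_zero (e i)

lemma elemOfLength {r a : ℕ} (G : TwoElementaryGram (Fin r) (Fin a)) :
    ElemOfLength 2 a G.gram := by
  let φ : (Fin r → ℤ) →ₗ[ℤ] (Fin a → ZMod 2) :=
    (LinearMap.compLeft (Int.castAddHom (ZMod 2)).toIntLinearMap (Fin a)) ∘ₗ G.proj.mulVecLin
  have hφ : ∀ v j, φ v j = (((G.proj *ᵥ v) j : ℤ) : ZMod 2) := fun v j => rfl
  have hsurj : Function.Surjective φ := fun u => by
    refine ⟨G.sec *ᵥ fun j => ((u j).val : ℤ), funext fun j => ?_⟩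
    rw [hφ, mulVec_mulVec, G.proj_mul_sec, one_mulVec]
    simp
  have hker : LinearMap.range G.gram.mulVecLin = LinearMap.ker φ := by
    ext v
    simp only [LinearMap.mem_range, LinearMap.mem_ker, mulVecLin_apply]
    constructor
    · rintro ⟨w, rfl⟩
      funext j
      rw [hφ, mulVec_mulVec, G.proj_mul_gram, smul_mulVec]
      simp only [Pi.smul_apply, smul_eq_mul, Int.cast_mul, Pi.zero_apply]
      rw [show ((2 : ℤ) : ZMod 2) = 0 from rfl, zero_mul]
    · intro hv
      have h1 : ∀ j, ∃ k, (G.proj *ᵥ v) j = 2 * k := fun j =>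
        (ZMod.intCast_zmod_eq_zero_iff_dvd _ 2).1 (by rw [← hφ, hv]; rfl)
      choose k hk using h1
      refine ⟨G.lift *ᵥ v + (G.dual * G.sec) *ᵥ k, ?_⟩
      have h2 : G.proj *ᵥ v = (2 : ℤ) • k := funext hk
      calc G.gram *ᵥ (G.lift *ᵥ v + (G.dual * G.sec) *ᵥ k)
          = (G.gram * G.lift) *ᵥ v + (G.sec * G.proj) *ᵥ v := by
            rw [mulVec_add, mulVec_mulVec, mulVec_mulVec, ← Matrix.mul_assoc, G.gram_mul_dual,
              Matrix.smul_mul, Matrix.one_mul, ← mulVec_mulVec v G.sec G.proj, h2, mulVec_smul,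
              smul_mulVec]
        _ = v := by rw [← add_mulVec, G.gram_mul_lift, one_mulVec]
  exact ⟨(Submodule.quotEquivOfEq _ _ hker).trans (φ.quotKerEquivOfSurjective hsurj)⟩

lemma det_gram_ne_zero (G : TwoElementaryGram ι κ) : G.gram.det ≠ 0 := by
  intro h
  have := congrArg det G.gram_mul_dual
  rw [det_mul, h, zero_mul, det_smul, det_one, mul_one] at this
  exact pow_ne_zero _ two_ne_zero this.symm

lemma deltaZero_gram_iff {r : ℕ} (G : TwoElementaryGram (Fin r) κ) :
    DeltaZero G.gram ↔ G.DualEven := by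
  rw [deltaZero_iff G.gram_mul_dual]
  have hs : G.dual.IsSymm :=
    isSymm_of_mul_eq_smul_one two_ne_zero G.isSymm G.det_gram_ne_zero G.gram_mul_dual
  refine ⟨fun h i => ?_, fun h => even_dotProduct_mulVec hs h⟩
  have := h (Pi.single i 1)
  simpa using this

lemma isHyperbolicGram {r : ℕ} (G : TwoElementaryGram (Fin r) κ)
    (hG : ∀ i, 0 < G.diag i ↔ (i : ℕ) = 0) : IsHyperbolicGram G.gram := by
  set s : Fin r → ℝ := fun i => (√|(G.diag i : ℝ)|)⁻¹ with hs
  set P : Matrix (Fin r) (Fin r) ℝ := G.basis.map (Int.cast : ℤ → ℝ) * diagonal s with hP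
  have hcongr : Pᵀ * G.gram.map (Int.cast : ℤ → ℝ) * P =
      diagonal fun i : Fin r => if (i : ℕ) = 0 then (1 : ℝ) else -1 := by
    have h1 : (G.basis.map (Int.cast : ℤ → ℝ))ᵀ * G.gram.map (Int.cast : ℤ → ℝ) *
        G.basis.map (Int.cast : ℤ → ℝ) = diagonal fun i => (G.diag i : ℝ) := by
      have := congrArg (fun A => A.map (Int.castRingHom ℝ)) G.basis_congr
      simp only [Matrix.map_mul, diagonal_map (map_zero _)] at this
      exact this
    calc Pᵀ * G.gram.map (Int.cast : ℤ → ℝ) * P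
        = diagonal s * ((G.basis.map (Int.cast : ℤ → ℝ))ᵀ * G.gram.map (Int.cast : ℤ → ℝ) *
          G.basis.map (Int.cast : ℤ → ℝ)) * diagonal s := by
          rw [hP, transpose_mul, diagonal_transpose]; simp only [Matrix.mul_assoc]
      _ = _ := by
          rw [h1, diagonal_mul_diagonal, diagonal_mul_diagonal]
          congr 1
          funext i
          have hd : (G.diag i : ℝ) ≠ 0 := Int.cast_ne_zero.2 (G.diag_ne_zero i)
          have hsq : s i * s i = |(G.diag i : ℝ)|⁻¹ := by
            rw [hs, ← mul_inv, Real.mul_self_sqrt (abs_nonneg _)]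
          rw [mul_right_comm, hsq]
          split_ifs with hi
          · have : (0 : ℝ) < G.diag i := Int.cast_pos.2 ((hG i).2 hi)
            rw [abs_of_pos this, inv_mul_cancel₀ hd]
          · have : (G.diag i : ℝ) < 0 :=
              lt_of_le_of_ne (Int.cast_nonpos.2 (not_lt.1 fun h => hi ((hG i).1 h))) hd
            rw [abs_of_neg this, inv_neg, neg_mul, inv_mul_cancel₀ hd]
  refine ⟨P, isUnit_iff_ne_zero.2 fun h => ?_, hcongr⟩
  have := congrArg det hcongr
  rw [det_mul, h, mul_zero, det_diagonal, eq_comm, Finset.prod_eq_zero_iff] at this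
  obtain ⟨i, -, hi⟩ := this
  split_ifs at hi <;> norm_num at hi

/-- A unimodular even Gram matrix. -/
def ofUnimodular (M N P : Matrix ι ι ℤ) (d : ι → ℤ) (hM : M.IsSymm) (hd : ∀ i, Even (M i i))
    (hMN : M * N = 1) (hP : Pᵀ * M * P = diagonal d) (hd0 : ∀ i, d i ≠ 0) :
    TwoElementaryGram ι (Fin 0) where
  gram := M
  proj := 0
  projQuot := 0
  sec := 0
  lift := N
  dual := (2 : ℤ) • N
  basis := P
  diag := d
  isSymm := hM
  even_diag := hd
  proj_mul_gram := by simp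
  proj_mul_sec := Subsingleton.elim _ _
  gram_mul_lift := by simp [hMN]
  gram_mul_dual := by rw [Matrix.mul_smul, hMN]
  basis_congr := hP
  diag_ne_zero := hd0

/-- A unimodular Gram matrix scaled by `2`. -/
def ofTwoSMulUnimodular (M N P : Matrix ι ι ℤ) (d : ι → ℤ) (hM : M.IsSymm)
    (hMN : M * N = 1) (hP : Pᵀ * M * P = diagonal d) (hd0 : ∀ i, d i ≠ 0) :
    TwoElementaryGram ι ι where
  gram := (2 : ℤ) • M
  proj := 1
  projQuot := M
  sec := 1
  lift := 0
  dual := N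
  basis := P
  diag := fun i => 2 * d i
  isSymm := by rw [IsSymm, transpose_smul, hM.eq]
  even_diag i := by simp
  proj_mul_gram := by simp
  proj_mul_sec := by simp
  gram_mul_lift := by simp
  gram_mul_dual := by rw [Matrix.smul_mul, hMN]
  basis_congr := by
    rw [Matrix.mul_smul, Matrix.smul_mul, hP, ← diagonal_smul]; rfl
  diag_ne_zero i := mul_ne_zero two_ne_zero (hd0 i)

end

end TwoElementaryGram

/-- Existence of a `TwoElementaryGram` of rank `r` and length `a` with `p` positive squares,
with discriminant form even exactly when `e` holds. -/
def Realizable (r a p : ℕ) (e : Prop) : Prop :=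
  ∃ (ι κ : Type) (_ : Fintype ι) (_ : DecidableEq ι) (_ : Fintype κ) (_ : DecidableEq κ)
    (G : TwoElementaryGram ι κ), Fintype.card ι = r ∧ Fintype.card κ = a ∧ G.posIndex = p ∧
      (G.DualEven ↔ e)

namespace Realizable

lemma add {r a p r' a' p' : ℕ} {e e' : Prop} (h : Realizable r a p e)
    (h' : Realizable r' a' p' e') : Realizable (r + r') (a + a') (p + p') (e ∧ e') := by
  obtain ⟨ι, κ, _, _, _, _, G, h1, h2, h3, h4⟩ := h
  obtain ⟨ι', κ', _, _, _, _, G', h1', h2', h3', h4'⟩ := h'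
  refine ⟨ι ⊕ ι', κ ⊕ κ', inferInstance, inferInstance, inferInstance, inferInstance,
    G.directSum G', ?_, ?_, ?_, ?_⟩
  · rw [Fintype.card_sum, h1, h1']
  · rw [Fintype.card_sum, h2, h2']
  · rw [TwoElementaryGram.posIndex_directSum, h3, h3']
  · rw [TwoElementaryGram.dualEven_directSum, h4, h4']

lemma congr {r a p r' a' p' : ℕ} {e e' : Prop} (h : Realizable r a p e) (hr : r = r')
    (ha : a = a') (hp : p = p') (he : e ↔ e') : Realizable r' a' p' e' := by
  subst hr ha hp
  rwa [propext he] at h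

lemma zero : Realizable 0 0 0 True :=
  ⟨Fin 0, Fin 0, inferInstance, inferInstance, inferInstance, inferInstance,
    TwoElementaryGram.ofUnimodular 0 0 0 0 (by simp) (by simp) (Subsingleton.elim _ _)
      (Subsingleton.elim _ _) (fun i => i.elim0), rfl, rfl, rfl, by
      simp [TwoElementaryGram.DualEven]⟩

lemma mul {r a p : ℕ} {e : Prop} (h : Realizable r a p e) (n : ℕ) :
    Realizable (n * r) (n * a) (n * p) (n = 0 ∨ e) := by
  induction n with
  | zero => exact zero.congr (by simp) (by simp) (by simp) (by simp)
  | succ n ih =>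
    exact (ih.add h).congr (by ring) (by ring) (by ring) (by simp; tauto)

lemma exists_gram {r a : ℕ} {e : Prop} (h : Realizable r a 1 e) :
    ∃ M : Matrix (Fin r) (Fin r) ℤ, M.IsSymm ∧ (∀ i, Even (M i i)) ∧ M.det ≠ 0 ∧
      IsHyperbolicGram M ∧ ElemOfLength 2 a M ∧ (DeltaZero M ↔ e) := by
  obtain ⟨ι, κ, _, _, _, _, G, h1, h2, h3, h4⟩ := h
  obtain ⟨i₀, hi₀⟩ := Finset.card_eq_one.1 h3
  have hpos : ∀ i, 0 < G.diag i ↔ i = i₀ := fun i => by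
    rw [← Finset.mem_singleton, ← hi₀, Finset.mem_filter]; simp
  have hr : 0 < r := h1 ▸ Fintype.card_pos_iff.2 ⟨i₀⟩
  let e₁ : Fin r ≃ ι := (Fintype.equivFinOfCardEq h1).symm
  let e₂ : Fin r ≃ ι := (Equiv.swap ⟨0, hr⟩ (e₁.symm i₀)).trans e₁
  have he₂ : e₂ ⟨0, hr⟩ = i₀ := by simp [e₂]
  let H := G.reindex e₂ (Fintype.equivFinOfCardEq h2).symm
  refine ⟨H.gram, H.isSymm, H.even_diag, H.det_gram_ne_zero, H.isHyperbolicGram fun i => ?_,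
    H.elemOfLength, H.deltaZero_gram_iff.trans (Iff.trans ?_ h4)⟩
  · change 0 < G.diag (e₂ i) ↔ _
    rw [hpos, ← he₂, e₂.apply_eq_iff_eq, Fin.ext_iff]
  · exact e₂.forall_congr_left.trans (by simp [TwoElementaryGram.DualEven, H,
      TwoElementaryGram.reindex])

end Realizable

/-- The Gram matrix of the hyperbolic plane. -/
def gramU : Matrix (Fin 2) (Fin 2) ℤ := !![0, 1; 1, 0]

/-- A basis change diagonalizing `gramU`. -/
def basisU : Matrix (Fin 2) (Fin 2) ℤ := !![1, 1; 1, -1]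

/-- The Gram matrix of the negative `E₈` lattice. -/
def gramE8 : Matrix (Fin 8) (Fin 8) ℤ :=
  !![-2, 1, 0, 0, 0, 0, 0, 0;
    1, -2, 1, 0, 0, 0, 0, 0;
    0, 1, -2, 1, 0, 0, 0, 0;
    0, 0, 1, -2, 1, 0, 0, 0;
    0, 0, 0, 1, -2, 1, 0, 1;
    0, 0, 0, 0, 1, -2, 1, 0;
    0, 0, 0, 0, 0, 1, -2, 0;
    0, 0, 0, 0, 1, 0, 0, -2]

/-- The inverse of `gramE8`. -/
def invE8 : Matrix (Fin 8) (Fin 8) ℤ :=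
  !![-2, -3, -4, -5, -6, -4, -2, -3;
    -3, -6, -8, -10, -12, -8, -4, -6;
    -4, -8, -12, -15, -18, -12, -6, -9;
    -5, -10, -15, -20, -24, -16, -8, -12;
    -6, -12, -18, -24, -30, -20, -10, -15;
    -4, -8, -12, -16, -20, -14, -7, -10;
    -2, -4, -6, -8, -10, -7, -4, -5;
    -3, -6, -9, -12, -15, -10, -5, -8]

/-- A basis change diagonalizing `gramE8`. -/
def basisE8 : Matrix (Fin 8) (Fin 8) ℤ :=
  !![1, 1, 1, 1, 1, 1, 1, 3;
    0, 2, 2, 2, 2, 2, 2, 6;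
    0, 0, 3, 3, 3, 3, 3, 9;
    0, 0, 0, 4, 4, 4, 4, 12;
    0, 0, 0, 0, 5, 5, 5, 15;
    0, 0, 0, 0, 0, 6, 6, 10;
    0, 0, 0, 0, 0, 0, 7, 5;
    0, 0, 0, 0, 0, 0, 0, 8]

namespace TwoElementaryGram

/-- The lattice `U`. -/
def U : TwoElementaryGram (Fin 2) (Fin 0) :=
  ofUnimodular gramU gramU basisU ![2, -2]
    (by decide +kernel) (by decide +kernel) (by decide +kernel) (by decide +kernel)
    (by decide +kernel)

/-- The lattice `U(2)`. -/
def U2 : TwoElementaryGram (Fin 2) (Fin 2) :=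
  ofTwoSMulUnimodular gramU gramU basisU ![2, -2]
    (by decide +kernel) (by decide +kernel) (by decide +kernel) (by decide +kernel)

/-- The lattice `⟨2⟩`. -/
def A1pos : TwoElementaryGram (Fin 1) (Fin 1) :=
  ofTwoSMulUnimodular 1 1 1 1
    (by decide +kernel) (by decide +kernel) (by decide +kernel) (by decide +kernel)

/-- The lattice `A₁ = ⟨-2⟩`. -/
def A1 : TwoElementaryGram (Fin 1) (Fin 1) :=
  ofTwoSMulUnimodular (-1) (-1) 1 (-1)
    (by decide +kernel) (by decide +kernel) (by decide +kernel) (by decide +kernel)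

/-- The lattice `E₈`. -/
def E8 : TwoElementaryGram (Fin 8) (Fin 0) :=
  ofUnimodular gramE8 invE8 basisE8 ![-2, -6, -12, -20, -30, -42, -56, -8]
    (by decide +kernel) (by decide +kernel) (by decide +kernel) (by decide +kernel)
    (by decide +kernel)

/-- The lattice `E₈(2)`. -/
def E82 : TwoElementaryGram (Fin 8) (Fin 8) :=
  ofTwoSMulUnimodular gramE8 invE8 basisE8 ![-2, -6, -12, -20, -30, -42, -56, -8]
    (by decide +kernel) (by decide +kernel) (by decide +kernel) (by decide +kernel)

/-- The lattice `D₄`. -/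
def D4 : TwoElementaryGram (Fin 4) (Fin 2) where
  gram := !![-2, 1, 0, 0; 1, -2, 1, 1; 0, 1, -2, 0; 0, 1, 0, -2]
  proj := !![0, 0, 1, 1; 1, 0, 0, 1]
  projQuot := !![0, 1, -1, -1; -1, 1, 0, -1]
  sec := !![0, 1; 0, 0; 1, 0; 0, 0]
  lift := !![0, -1, 0, 1; 0, -2, 0, 1; 0, -1, 0, 1; 0, -1, 0, 0]
  dual := !![-2, -2, -1, -1; -2, -4, -2, -2; -1, -2, -2, -1; -1, -2, -1, -2]
  basis := !![1, 1, 1, 1; 0, 2, 2, 2; 0, 0, 3, 1; 0, 0, 0, 2]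
  diag := ![-2, -6, -12, -4]
  isSymm := by decide +kernel
  even_diag := by decide +kernel
  proj_mul_gram := by decide +kernel
  proj_mul_sec := by decide +kernel
  gram_mul_lift := by decide +kernel
  gram_mul_dual := by decide +kernel
  basis_congr := by decide +kernel
  diag_ne_zero := by decide +kernel

/-- The lattice `E₇`. -/
def E7 : TwoElementaryGram (Fin 7) (Fin 1) where
  gram :=
    !![-2, 1, 0, 0, 0, 0, 0;
      1, -2, 1, 0, 0, 0, 0;
      0, 1, -2, 1, 0, 0, 0;
      0, 0, 1, -2, 1, 0, 1;
      0, 0, 0, 1, -2, 1, 0;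
      0, 0, 0, 0, 1, -2, 0;
      0, 0, 0, 1, 0, 0, -2]
  proj := !![1, 0, 1, 0, 0, 0, 1]
  projQuot := !![-1, 1, -1, 1, 0, 0, -1]
  sec := !![1; 0; 0; 0; 0; 0; 0]
  lift :=
    !![0, -2, -1, -3, -2, -1, 0;
      0, -4, -3, -6, -4, -2, -1;
      0, -5, -5, -9, -6, -3, -2;
      0, -6, -6, -12, -8, -4, -3;
      0, -4, -4, -8, -6, -3, -2;
      0, -2, -2, -4, -3, -2, -1;
      0, -3, -3, -6, -4, -2, -2]
  dual :=
    !![-3, -4, -5, -6, -4, -2, -3;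
      -4, -8, -10, -12, -8, -4, -6;
      -5, -10, -15, -18, -12, -6, -9;
      -6, -12, -18, -24, -16, -8, -12;
      -4, -8, -12, -16, -12, -6, -8;
      -2, -4, -6, -8, -6, -4, -4;
      -3, -6, -9, -12, -8, -4, -7]
  basis :=
    !![1, 1, 1, 1, 1, 1, 3;
      0, 2, 2, 2, 2, 2, 6;
      0, 0, 3, 3, 3, 3, 9;
      0, 0, 0, 4, 4, 4, 12;
      0, 0, 0, 0, 5, 5, 8;
      0, 0, 0, 0, 0, 6, 4;
      0, 0, 0, 0, 0, 0, 7]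
  diag := ![-2, -6, -12, -20, -30, -42, -14]
  isSymm := by decide +kernel
  even_diag := by decide +kernel
  proj_mul_gram := by decide +kernel
  proj_mul_sec := by decide +kernel
  gram_mul_lift := by decide +kernel
  gram_mul_dual := by decide +kernel
  basis_congr := by decide +kernel
  diag_ne_zero := by decide +kernel

end TwoElementaryGram

namespace Realizable

lemma of_gram {r a p : ℕ} {e : Prop} (G : TwoElementaryGram (Fin r) (Fin a))
    (hp : (Finset.univ.filter fun i => 0 < G.diag i).card = p)
    (he : (∀ i, Even (G.dual i i)) ↔ e) : Realizable r a p e :=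
  ⟨Fin r, Fin a, inferInstance, inferInstance, inferInstance, inferInstance, G,
    Fintype.card_fin r, Fintype.card_fin a, hp, he⟩

lemma U : Realizable 2 0 1 True :=
  of_gram TwoElementaryGram.U (by decide +kernel) (by decide +kernel)

lemma U2 : Realizable 2 2 1 True :=
  of_gram TwoElementaryGram.U2 (by decide +kernel) (by decide +kernel)

lemma A1pos : Realizable 1 1 1 False :=
  of_gram TwoElementaryGram.A1pos (by decide +kernel) (by decide +kernel)

lemma A1 : Realizable 1 1 0 False :=
  of_gram TwoElementaryGram.A1 (by decide +kernel) (by decide +kernel)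

lemma D4 : Realizable 4 2 0 True :=
  of_gram TwoElementaryGram.D4 (by decide +kernel) (by decide +kernel)

lemma E7 : Realizable 7 1 0 False :=
  of_gram TwoElementaryGram.E7 (by decide +kernel) (by decide +kernel)

lemma E8 : Realizable 8 0 0 True :=
  of_gram TwoElementaryGram.E8 (by decide +kernel) (by decide +kernel)

lemma E82 : Realizable 8 8 0 True :=
  of_gram TwoElementaryGram.E82 (by decide +kernel) (by decide +kernel)

/-- Sums of the root lattices `D₄`, `E₈` and of `E₈(2)`. -/
lemma even_negative (k x y z : ℕ) :
    Realizable (8 * x + 8 * y + 8 * z + 4 * k) (4 * y + 8 * z + 2 * k) 0 True :=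
  ((((E8.mul x).add (D4.mul (2 * y))).add (E82.mul z)).add (D4.mul k)).congr
    (by ring) (by ring) (by ring) (by simp)

lemma of_even {r a : ℕ} (har : a ≤ r) (h2 : r % 2 = a % 2) (h4 : r % 4 = 2)
    (h0 : a = 0 → r % 8 = 2) (h8 : a = r → r % 8 = 2) : Realizable r a 1 True := by
  obtain ⟨k, u, x, y, z, hu, hr, ha⟩ : ∃ k u x y z : ℕ, u ≤ 1 ∧
      r = 2 + (8 * x + 8 * y + 8 * z + 4 * k) ∧ a = 2 * u + (4 * y + 8 * z + 2 * k) := by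
    obtain ⟨k, hk⟩ : ∃ k, k = (r - 2) / 4 % 2 := ⟨_, rfl⟩
    obtain ⟨b, hb⟩ : ∃ b, b = a - 2 * k := ⟨_, rfl⟩
    exact ⟨k, b / 2 % 2, (r - 2 - 4 * k) / 8 - b / 4 % 2 - b / 8, b / 4 % 2, b / 8,
      by omega, by omega, by omega⟩
  have hn := even_negative k x y z
  interval_cases u
  · exact (U.add hn).congr hr.symm (by omega) rfl (by simp)
  · exact (U2.add hn).congr hr.symm (by omega) rfl (by simp)

lemma of_odd {r a : ℕ} (ha : a ≠ 0) (har : a ≤ r) (h2 : r % 2 = a % 2)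
    (h1 : a = 1 → (r % 8 = 3 ∨ r % 8 = 1)) (h6 : a = 2 → r % 8 ≠ 6) (hr : 2 ≤ r) :
    Realizable r a 1 False := by
  have hmod : (r - a) % 8 = 0 ∨ (r - a) % 8 = 2 ∨ (r - a) % 8 = 4 ∨ (r - a) % 8 = 6 := by omega
  obtain ⟨j, hj⟩ : ∃ j, j = (r - a) / 8 := ⟨_, rfl⟩
  rcases hmod with h | h | h | h
  · exact ((A1pos.add (A1.mul (a - 1))).add (E8.mul j)).congr (by omega) (by omega) (by omega)
      (by simp)
  · exact ((U.add (A1.mul a)).add (E8.mul j)).congr (by omega) (by omega) (by omega)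
      (by simp [ha])
  · exact (((U.add D4).add (A1.mul (a - 2))).add (E8.mul j)).congr (by omega) (by omega)
      (by omega) (by simp; omega)
  · exact (((A1pos.add E7).add (A1.mul (a - 2))).add (E8.mul j)).congr (by omega) (by omega)
      (by omega) (by simp)

end Realizable

/-- Nikulin's existence criterion for even hyperbolic 2-elementary lattices with
invariants `(r, a, δ)`. -/
theorem stmt_8 (r a δ : ℕ) (hr : 2 ≤ r) (hδ : δ = 0 ∨ δ = 1) :
    (∃ M : Matrix (Fin r) (Fin r) ℤ, M.IsSymm ∧ (∀ i, Even (M i i)) ∧ M.det ≠ 0 ∧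
        IsHyperbolicGram M ∧ ElemOfLength 2 a M ∧ (δ = 0 ↔ DeltaZero M)) ↔
      (a ≤ r ∧
        r % 2 = a % 2 ∧
        (δ = 0 → r % 4 = 2) ∧
        (a = 0 → δ = 0) ∧
        (a ≤ 1 → (r % 8 = (2 + a) % 8 ∨ r % 8 = (2 - a) % 8)) ∧
        ((a = 2 ∧ r % 8 = 6) → δ = 0) ∧
        ((δ = 0 ∧ a = r) → r % 8 = 2)) := by
  constructor
  · rintro ⟨M, hMs, hMd, hdet, hH, hE, hM⟩
    rw [hM]
    exact necessity hr hMs hMd hdet hH hE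
  · rintro ⟨har, h2, h4, h0, h1, h6, h8⟩
    have hmain : Realizable r a 1 (δ = 0) := by
      rcases hδ with rfl | rfl
      · refine (Realizable.of_even har h2 (h4 rfl) (fun h => ?_) fun h => h8 ⟨rfl, h⟩).congr rfl
          rfl rfl (by simp)
        subst h
        simpa using h1 (by omega)
      · refine (Realizable.of_odd (fun h => ?_) har h2 (fun h => ?_) (fun h h' => ?_) hr).congr rfl
          rfl rfl (by simp)
        · exact one_ne_zero (h0 h)
        · subst h
          simpa using h1 le_rfl
        · exact one_ne_zero (h6 ⟨h, h'⟩)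
    obtain ⟨M, hMs, hMd, hdet, hH, hE, hM⟩ := hmain.exists_gram
    exact ⟨M, hMs, hMd, hdet, hH, hE, hM.symm⟩
end
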